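/- arXiv:2507.16107 — 9 statements merged into one kernel-verified Lean document; each statement's English description precedes it below -/
import Mathlib

section
/- Let H be a PM-ID compatible pattern DAG with vertex set Ṽ ⊆ {0,1}^K, and let p and q be two full laws such that (i) p(X = x, O = o, R = r) > 0 and q(X = x, O = o, R = r) > 0 for every pattern r ∈ Ṽ and all values x, o; (ii) p and q have the same observed law; and (iii) every labeled edge of H is valid for both p and q. Then p(X = x, O = o, R = r) = q(X = x, O = o, R = r) for every pattern r ∈ Ṽ and all values x, o. (Identifiability form of the PM-ID algorithm: the full law at every pattern in Ṽ is determined by the observed law.) -/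
/-!
Fix a pattern `r` all of whose parents already satisfy `p = q`. An edge `r' →ⁱ r` transfers the
conditional of `Xᵢ` from `r'`, so at `r` the masses `p` and `q` have the same conditional of `Xᵢ`.
Equivalently, `p / q` at `r` does not change with `xᵢ`. Since every missing coordinate of `r`
labels an incoming edge, `p / q` is a function of the observed coordinates alone. It therefore
factors out of the sum that defines the observed mass, and equality of the observed masses forces
it to be `1`. Induction along the acyclic edge relation concludes.
-/

open Finset Function

section Marginal

variable {ι R : Type*} [DecidableEq ι] {𝒳 : ι → Type*}

theorem dependsOn_compl_of_update_eq {β : Type*} {F : (∀ i, 𝒳 i) → β} {s : Finset ι}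
    (hF : ∀ i ∈ s, ∀ (x : ∀ i, 𝒳 i) (y : 𝒳 i), F (update x i y) = F x) :
    DependsOn F (s : Set ι)ᶜ := by
  intro x z hxz
  have piecewise_eq : ∀ t ⊆ s, F (t.piecewise x z) = F z := by
    intro t
    induction t using Finset.induction_on with
    | empty => simp
    | insert i t _ ih =>
      intro hts
      obtain ⟨hi, ht⟩ := insert_subset_iff.mp hts
      rw [piecewise_insert, hF i hi, ih ht]
  have x_eq : s.piecewise x z = x := by
    ext i
    by_cases hi : i ∈ s
    · simp [hi]
    · simp [hi, hxz i hi]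
  rw [← piecewise_eq s Subset.rfl, x_eq]

/-- The mass of the event `X₋ᵢ = x₋ᵢ`, where `f` is the mass function of `X` (at a fixed outcome
and missingness pattern); the value `x i` is irrelevant. It is the denominator of the conditional
probability of `Xᵢ` given the other coordinates. -/
def coordMarginal [AddCommMonoid R] (i : ι) [Fintype (𝒳 i)] (f : (∀ i, 𝒳 i) → R)
    (x : ∀ i, 𝒳 i) : R :=
  ∑ y : 𝒳 i, f (update x i y)

theorem coordMarginal_update [AddCommMonoid R] (i : ι) [Fintype (𝒳 i)] (f : (∀ i, 𝒳 i) → R)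
    (x : ∀ i, 𝒳 i) (y : 𝒳 i) : coordMarginal i f (update x i y) = coordMarginal i f x := by
  simp only [coordMarginal, update_idem]

theorem coordMarginal_pos [AddCommMonoid R] [PartialOrder R] [IsOrderedCancelAddMonoid R]
    {i : ι} [Fintype (𝒳 i)] {f : (∀ i, 𝒳 i) → R} (hf : ∀ x, 0 < f x) (x : ∀ i, 𝒳 i) :
    0 < coordMarginal i f x :=
  sum_pos (fun _ _ ↦ hf _) ⟨x i, mem_univ _⟩

end Marginal

section SameConditional

variable {ι 𝕜 : Type*} [DecidableEq ι] {𝒳 : ι → Type*} [Field 𝕜] [PartialOrder 𝕜]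
  {i : ι} [Fintype (𝒳 i)] {f g h : (∀ i, 𝒳 i) → 𝕜}

/-- Two mass functions give `Xᵢ` the same conditional probabilities given `X₋ᵢ`, wherever both are
defined. An edge `r' →ⁱ r` is valid when this holds for the masses at `r` and `r'`. -/
def SameConditional (i : ι) [Fintype (𝒳 i)] (f g : (∀ i, 𝒳 i) → 𝕜) : Prop :=
  ∀ x, 0 < coordMarginal i f x → 0 < coordMarginal i g x →
    f x / coordMarginal i f x = g x / coordMarginal i g x

theorem SameConditional.symm (hfg : SameConditional i f g) : SameConditional i g f :=
  fun x hg hf ↦ (hfg x hf hg).symm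

theorem SameConditional.trans (hg : ∀ x, 0 < coordMarginal i g x)
    (hfg : SameConditional i f g) (hgh : SameConditional i g h) : SameConditional i f h :=
  fun x hf hh ↦ (hfg x hf (hg x)).trans (hgh x (hg x) hh)

theorem SameConditional.div_update_eq [IsOrderedCancelAddMonoid 𝕜] (hfg : SameConditional i f g)
    (hf : ∀ x, 0 < f x) (hg : ∀ x, 0 < g x) (x : ∀ i, 𝒳 i) (y : 𝒳 i) :
    f (update x i y) / g (update x i y) = f x / g x := by
  have ratio_eq : ∀ z, f z / g z = coordMarginal i f z / coordMarginal i g z := by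
    intro z
    have hfz := coordMarginal_pos (i := i) hf z
    have hgz := coordMarginal_pos (i := i) hg z
    exact (div_eq_div_iff_div_eq_div' hfz.ne' (hg z).ne').mp (hfg z hfz hgz)
  rw [ratio_eq, ratio_eq, coordMarginal_update, coordMarginal_update]

end SameConditional

section ObservedMass

variable {ι : Type*} {𝒳 : ι → Type*} [Fintype (∀ i, 𝒳 i)]

open Classical in
/-- The mass of the event `X_{O(r)} = x_{O(r)}`, where `f` is the mass function of `X` at the
pattern `r`. Only the coordinates of `x` observed under `r` matter, so this is the observed law at
`r` encoded as a function of a full assignment. -/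
noncomputable def observedMass {R : Type*} [AddCommMonoid R] (r : ι → Bool) (f : (∀ i, 𝒳 i) → R)
    (x : ∀ i, 𝒳 i) : R :=
  ∑ x' : ∀ i, 𝒳 i, if ∀ i, r i = true → x' i = x i then f x' else 0

theorem observedMass_pos {R : Type*} [AddCommMonoid R] [PartialOrder R]
    [IsOrderedCancelAddMonoid R] (r : ι → Bool) {f : (∀ i, 𝒳 i) → R} (hf : ∀ x, 0 < f x)
    (x : ∀ i, 𝒳 i) : 0 < observedMass r f x := by
  refine sum_pos' (fun x' _ ↦ ?_) ⟨x, mem_univ x, by simpa using hf x⟩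
  split_ifs
  exacts [(hf x').le, le_rfl]

theorem observedMass_eq_div_mul {𝕜 : Type*} [Field 𝕜] {r : ι → Bool} {f g : (∀ i, 𝒳 i) → 𝕜}
    (hg : ∀ x, g x ≠ 0) (hfg : DependsOn (fun x ↦ f x / g x) {i | r i = true})
    (x : ∀ i, 𝒳 i) : observedMass r f x = f x / g x * observedMass r g x := by
  simp only [observedMass, mul_sum, mul_ite, mul_zero]
  refine sum_congr rfl fun x' _ ↦ ?_
  split_ifs with hx'
  · have ratio_eq : f x' / g x' = f x / g x := hfg hx'
    rw [← ratio_eq, div_mul_cancel₀ _ (hg x')]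
  · rfl

theorem eq_of_observedMass_eq_of_dependsOn_div {𝕜 : Type*} [Field 𝕜] [PartialOrder 𝕜]
    [IsOrderedCancelAddMonoid 𝕜] {r : ι → Bool} {f g : (∀ i, 𝒳 i) → 𝕜} (hg : ∀ x, 0 < g x)
    (hfg : DependsOn (fun x ↦ f x / g x) {i | r i = true})
    (hobs : observedMass r f = observedMass r g) : f = g := by
  ext x
  have factored := observedMass_eq_div_mul (fun x ↦ (hg x).ne') hfg x
  rw [hobs, eq_comm, mul_eq_right₀ (observedMass_pos r hg x).ne'] at factored
  exact (div_eq_one_iff_eq (hg x).ne').mp factored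

end ObservedMass

section PatternDAG

theorem wellFounded_of_irrefl_transGen {V : Type*} [Finite V] {e : V → V → Prop}
    (he : ∀ v, ¬ Relation.TransGen e v v) : WellFounded e :=
  have : Std.Irrefl (Relation.TransGen e) := ⟨he⟩
  Subrelation.wf Relation.TransGen.single (Finite.wellFounded_of_trans_of_irrefl _)

variable {ι 𝕜 : Type*} [Fintype ι] [DecidableEq ι] {𝒳 : ι → Type*} [∀ i, Fintype (𝒳 i)]
  [Field 𝕜] [PartialOrder 𝕜] [IsOrderedCancelAddMonoid 𝕜]

theorem eq_of_observedMass_eq_of_sameConditional {r : ι → Bool} {f g : (∀ i, 𝒳 i) → 𝕜}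
    (hf : ∀ x, 0 < f x) (hg : ∀ x, 0 < g x)
    (hcond : ∀ i, r i = false → SameConditional i f g)
    (hobs : observedMass r f = observedMass r g) : f = g := by
  refine eq_of_observedMass_eq_of_dependsOn_div hg ?_ hobs
  have off_missing : DependsOn (fun x ↦ f x / g x) (({i | r i = false} : Finset ι) : Set ι)ᶜ :=
    dependsOn_compl_of_update_eq fun i hi ↦ (hcond i (by simpa using hi)).div_update_eq hf hg
  exact off_missing.mono fun i hi ↦ by simpa using hi

theorem pm_id_identifiability_general {𝒪 : Type*}
    (p q : (∀ i, 𝒳 i) → 𝒪 → (ι → Bool) → 𝕜)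
    (Vt : Set (ι → Bool)) (E : (ι → Bool) → ι → (ι → Bool) → Prop)
    (hE_acyclic : ∀ r, ¬ Relation.TransGen (fun a b ↦ ∃ i, E a i b) r r)
    (hE_missing : ∀ r ∈ Vt, ∀ i, r i = false → ∃ r' ∈ Vt, E r' i r)
    (hp_pos : ∀ r ∈ Vt, ∀ x o, 0 < p x o r)
    (hq_pos : ∀ r ∈ Vt, ∀ x o, 0 < q x o r)
    (h_obs : ∀ r ∈ Vt, ∀ o, observedMass r (p · o r) = observedMass r (q · o r))
    (h_valid_p : ∀ r' i r, E r' i r → ∀ o, SameConditional i (p · o r) (p · o r'))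
    (h_valid_q : ∀ r' i r, E r' i r → ∀ o, SameConditional i (q · o r) (q · o r')) :
    ∀ r ∈ Vt, ∀ x o, p x o r = q x o r := by
  intro r
  induction r using (wellFounded_of_irrefl_transGen hE_acyclic).induction with
  | _ r ih =>
  intro hr x o
  suffices (p · o r) = (q · o r) from congrFun this x
  refine eq_of_observedMass_eq_of_sameConditional (fun x ↦ hp_pos r hr x o)
    (fun x ↦ hq_pos r hr x o) (fun i hi ↦ ?_) (h_obs r hr o)
  obtain ⟨r', hr', hedge⟩ := hE_missing r hr i hi
  have parent_eq : (p · o r') = (q · o r') := funext fun z ↦ ih r' ⟨i, hedge⟩ hr' z o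
  have hp_cond : SameConditional i (p · o r) (q · o r') := parent_eq ▸ h_valid_p r' i r hedge o
  exact hp_cond.trans (coordMarginal_pos fun z ↦ hq_pos r' hr' z o) (h_valid_q r' i r hedge o).symm

end PatternDAG

/-- Identifiability form of the PM-ID algorithm: given a PM-ID compatible
pattern DAG `H = (Vt, E)`, two full laws that are positive on every pattern in `Vt`,
have the same observed law, and for which every labeled edge of `H` is valid, agree
at every pattern in `Vt`. -/
theorem pm_id_identifiability
    (K : ℕ) (hK : 1 ≤ K)
    (𝒳 : Fin K → Type) [∀ i, Fintype (𝒳 i)] [∀ i, Nonempty (𝒳 i)]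
    [∀ i, DecidableEq (𝒳 i)]
    (𝒪 : Type) [Fintype 𝒪] [Nonempty 𝒪]
    (p q : (∀ i, 𝒳 i) → 𝒪 → (Fin K → Bool) → ℝ)
    -- `p` and `q` are probability mass functions (full laws)
    (hp_nonneg : ∀ x o r, 0 ≤ p x o r)
    (hp_sum : ∑ x : ∀ i, 𝒳 i, ∑ o : 𝒪, ∑ r : Fin K → Bool, p x o r = 1)
    (hq_nonneg : ∀ x o r, 0 ≤ q x o r)
    (hq_sum : ∑ x : ∀ i, 𝒳 i, ∑ o : 𝒪, ∑ r : Fin K → Bool, q x o r = 1)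
    -- a pattern DAG `H` with vertex set `Vt ⊆ {0,1}^K` and labeled edges `E r̃ i r`
    (Vt : Set (Fin K → Bool))
    (E : (Fin K → Bool) → Fin K → (Fin K → Bool) → Prop)
    (hE_vert : ∀ r' i r, E r' i r → r' ∈ Vt ∧ r ∈ Vt ∧ r' ≠ r)
    (hE_acyclic : ∀ r, ¬ Relation.TransGen (fun a b => ∃ i, E a i b) r r)
    -- PM-ID compatibility (I1): the complete case pattern is a root vertex of `H`
    (hI1_mem : (fun _ => true) ∈ Vt)
    (hI1_root : ∀ r' i, ¬ E r' i (fun _ => true))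
    -- PM-ID compatibility (I2): for every `r ∈ Vt` and `i ∈ M(r)` there is a directed
    -- path from the complete case pattern to `r` whose last edge is labeled `i`
    (hI2 : ∀ r ∈ Vt, ∀ i : Fin K, r i = false →
      ∃ r', E r' i r ∧
        Relation.ReflTransGen (fun a b => ∃ j, E a j b) (fun _ => true) r')
    -- (i) positivity at every pattern in `Vt`
    (hp_pos : ∀ r ∈ Vt, ∀ (x : ∀ i, 𝒳 i) (o : 𝒪), 0 < p x o r)
    (hq_pos : ∀ r ∈ Vt, ∀ (x : ∀ i, 𝒳 i) (o : 𝒪), 0 < q x o r)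
    -- (ii) `p` and `q` have the same observed law
    (h_obs : ∀ (r : Fin K → Bool) (o : 𝒪) (x : ∀ i, 𝒳 i),
      (∑ x' : ∀ i, 𝒳 i, if ∀ i, r i = true → x' i = x i then p x' o r else 0)
        = ∑ x' : ∀ i, 𝒳 i, if ∀ i, r i = true → x' i = x i then q x' o r else 0)
    -- (iii) every labeled edge of `H` is valid for `p` and for `q`
    (h_valid_p : ∀ r' i r, E r' i r → ∀ (x : ∀ j, 𝒳 j) (o : 𝒪),
      0 < (∑ y : 𝒳 i, p (Function.update x i y) o r) →
      0 < (∑ y : 𝒳 i, p (Function.update x i y) o r') →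
      p x o r / (∑ y : 𝒳 i, p (Function.update x i y) o r)
        = p x o r' / (∑ y : 𝒳 i, p (Function.update x i y) o r'))
    (h_valid_q : ∀ r' i r, E r' i r → ∀ (x : ∀ j, 𝒳 j) (o : 𝒪),
      0 < (∑ y : 𝒳 i, q (Function.update x i y) o r) →
      0 < (∑ y : 𝒳 i, q (Function.update x i y) o r') →
      q x o r / (∑ y : 𝒳 i, q (Function.update x i y) o r)
        = q x o r' / (∑ y : 𝒳 i, q (Function.update x i y) o r')) :
    ∀ r ∈ Vt, ∀ (x : ∀ i, 𝒳 i) (o : 𝒪), p x o r = q x o r := by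
  exact pm_id_identifiability_general p q Vt E hE_acyclic
    (fun r hr i hi ↦ (hI2 r hr i hi).imp fun r' h ↦ ⟨(hE_vert r' i r h.1).1, h.1⟩) hp_pos hq_pos
    (fun r _ o ↦ funext fun x ↦ by simp only [observedMass]; convert h_obs r o x)
    (fun r' i r h o x ↦ h_valid_p r' i r h x o) (fun r' i r h o x ↦ h_valid_q r' i r h x o)
end

section
/- Let p and q be full laws that are strictly positive, i.e., p(X = x, O = o, R = r) > 0 and q(X = x, O = o, R = r) > 0 for all values x, o and all patterns r. Suppose p and q have the same observed law, and suppose that for every i ∈ {1,…,K} the conditional independence X_i ⊥ R_i | X_{-i}, R_{-i}, O holds under both p and q. Then p = q. (Soundness of PM-ID: under strict positivity and the itemwise independences implied by the graphical condition (S1), the full law is identified from the observed law.) -/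
/-!
Induct on the missingness pattern `r`, downwards from the fully observed one, so that `p` and `q`
agree at every pattern observing one more item than `r`. Itemwise independence says that the odds
`p(x, r) / p(x, r ∪ {i})` do not depend on `x_i`, and likewise for `q`; hence the ratio
`p(x, r) / q(x, r)` does not change when a missing coordinate of `x` does. It is therefore a
constant `c` on the set of completions of `x_{O(r)}`. Summing over that set gives the observed laws
of `p` and `q`, which are equal, so `c = 1`.
-/

open Function

namespace MissingData

variable {ι : Type*} {𝒳 : ι → Type*}

/-- The assignments `x'` and `x` coincide on `O(r)`, the set of coordinates observed under the
pattern `r`. Here and below `true` means observed. -/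
def AgreeOnObserved (r : ι → Bool) (x' x : ∀ i, 𝒳 i) : Prop :=
  ∀ i, r i = true → x' i = x i

lemma AgreeOnObserved.induction_update [Finite ι] [DecidableEq ι] {r : ι → Bool} {x : ∀ i, 𝒳 i}
    {P : (∀ i, 𝒳 i) → Prop} (base : P x)
    (step : ∀ z, AgreeOnObserved r z x → ∀ i, r i = false → ∀ y, P z → P (update z i y))
    {z : ∀ i, 𝒳 i} (hz : AgreeOnObserved r z x) : P z := by
  cases nonempty_fintype ι
  suffices h : ∀ s : Finset ι, P (s.piecewise z x) by simpa using h Finset.univ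
  intro s
  induction s using Finset.induction_on with
  | empty => simpa using base
  | insert i s _ ih =>
    have hs : AgreeOnObserved r (s.piecewise z x) x := fun j hj ↦ by
      by_cases hjs : j ∈ s <;> simp [hjs, hz j hj]
    rw [Finset.piecewise_insert]
    cases hi : r i with
    | false => exact step _ hs i hi _ ih
    | true => rwa [hz i hi, ← hs i hi, update_eq_self]

section ObservedLaw

variable {R : Type*} [Fintype ι] [DecidableEq ι] [∀ i, Fintype (𝒳 i)]

open Classical in
/-- The observed law of `p`, as a function of the pattern `r` and of the coordinates of `x` in
`O(r)`: the sum of `p` over all completions of these coordinates. A law of `(X, R)` is encoded as a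
function `p x r`; the always observed variables `O` are a mere parameter and are left out. -/
noncomputable def observedLaw [AddCommMonoid R] (p : (∀ i, 𝒳 i) → (ι → Bool) → R) (r : ι → Bool)
    (x : ∀ i, 𝒳 i) : R :=
  ∑ x' : ∀ i, 𝒳 i, if AgreeOnObserved r x' x then p x' r else 0

open Classical in
lemma observedLaw_eq_mul [NonUnitalNonAssocSemiring R] {p q : (∀ i, 𝒳 i) → (ι → Bool) → R}
    {r : ι → Bool} {x : ∀ i, 𝒳 i} {c : R}
    (h : ∀ x', AgreeOnObserved r x' x → p x' r = c * q x' r) :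
    observedLaw p r x = c * observedLaw q r x := by
  simp_rw [observedLaw, Finset.mul_sum, mul_ite, mul_zero]
  exact Finset.sum_congr rfl fun x' _ ↦ ite_congr rfl (h x') fun _ ↦ rfl

open Classical in
lemma le_observedLaw [AddCommMonoid R] [PartialOrder R] [IsOrderedAddMonoid R]
    {p : (∀ i, 𝒳 i) → (ι → Bool) → R} {r : ι → Bool} (hp : ∀ x, 0 ≤ p x r) (x : ∀ i, 𝒳 i) :
    p x r ≤ observedLaw p r x := by
  calc p x r = if AgreeOnObserved r x x then p x r else 0 := (if_pos fun _ _ ↦ rfl).symm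
    _ ≤ observedLaw p r x := Finset.single_le_sum
        (f := fun x' ↦ if AgreeOnObserved r x' x then p x' r else 0)
        (fun x' _ ↦ ite_nonneg (hp x') le_rfl) (Finset.mem_univ x)

end ObservedLaw

section ItemCondIndep

variable {R : Type*} [DecidableEq ι] {i : ι} [Fintype (𝒳 i)]

variable (i) in
/-- The probability of `X_{-i} = x_{-i}, R_{-i} = r_{-i}` under `p`. -/
def itemMarginal [AddCommMonoid R] (p : (∀ i, 𝒳 i) → (ι → Bool) → R)
    (x : ∀ i, 𝒳 i) (r : ι → Bool) : R :=
  ∑ y : 𝒳 i, ∑ b : Bool, p (update x i y) (update r i b)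

lemma itemMarginal_update_right [AddCommMonoid R] (p : (∀ i, 𝒳 i) → (ι → Bool) → R)
    (x : ∀ i, 𝒳 i) (r : ι → Bool) (b : Bool) :
    itemMarginal i p x (update r i b) = itemMarginal i p x r := by
  simp only [itemMarginal, update_idem]

lemma itemMarginal_update_left [AddCommMonoid R] (p : (∀ i, 𝒳 i) → (ι → Bool) → R)
    (x : ∀ i, 𝒳 i) (r : ι → Bool) (y : 𝒳 i) :
    itemMarginal i p (update x i y) r = itemMarginal i p x r := by
  simp only [itemMarginal, update_idem]

lemma sum_update_pos [AddCommMonoid R] [PartialOrder R] [IsOrderedCancelAddMonoid R]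
    {f : (∀ i, 𝒳 i) → R} (hf : ∀ x, 0 ≤ f x) {x : ∀ i, 𝒳 i} (hx : 0 < f x) :
    0 < ∑ y : 𝒳 i, f (update x i y) :=
  Finset.sum_pos' (fun _ _ ↦ hf _) ⟨x i, Finset.mem_univ _, by rwa [update_eq_self]⟩

lemma itemMarginal_pos [AddCommMonoid R] [PartialOrder R] [IsOrderedCancelAddMonoid R]
    {p : (∀ i, 𝒳 i) → (ι → Bool) → R} (hp : ∀ x r, 0 ≤ p x r) {x : ∀ i, 𝒳 i} {r : ι → Bool}
    (hx : 0 < p x r) : 0 < itemMarginal i p x r :=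
  sum_update_pos (f := fun x ↦ ∑ b, p x (update r i b))
    (fun _ ↦ Finset.sum_nonneg fun _ _ ↦ hp _ _)
    (sum_update_pos (𝒳 := fun _ ↦ Bool) (hp x) hx)

variable [Field R] [LinearOrder R]

variable (i) in
/-- The conditional independence `X_i ⊥ R_i | X_{-i}, R_{-i}` under `p`, with the conditional
probabilities given by `X_{-i} = x_{-i}, R_{-i} = r_{-i}` written out as quotients. -/
def ItemCondIndep (p : (∀ i, 𝒳 i) → (ι → Bool) → R) : Prop :=
  ∀ (x : ∀ i, 𝒳 i) (r : ι → Bool), 0 < itemMarginal i p x r →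
    p x r / itemMarginal i p x r
      = (∑ b : Bool, p x (update r i b)) / itemMarginal i p x r
        * ((∑ y : 𝒳 i, p (update x i y) r) / itemMarginal i p x r)

variable {p q : (∀ i, 𝒳 i) → (ι → Bool) → R} {x : ∀ i, 𝒳 i} {r : ι → Bool}

namespace ItemCondIndep

lemma mul_itemMarginal (h : ItemCondIndep i p) (hpos : 0 < itemMarginal i p x r) :
    p x r * itemMarginal i p x r
      = (∑ b : Bool, p x (update r i b)) * ∑ y : 𝒳 i, p (update x i y) r := by
  have hx := h x r hpos
  field_simp [hpos.ne'] at hx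
  exact hx

lemma mul_sum_update (h : ItemCondIndep i p) (hpos : 0 < itemMarginal i p x r) (b : Bool) :
    p x r * ∑ y : 𝒳 i, p (update x i y) (update r i b)
      = p x (update r i b) * ∑ y : 𝒳 i, p (update x i y) r := by
  have hr := h.mul_itemMarginal hpos
  have hb := h.mul_itemMarginal (r := update r i b) (by rwa [itemMarginal_update_right])
  simp only [update_idem, itemMarginal_update_right] at hb
  apply mul_right_cancel₀ hpos.ne'
  linear_combination (∑ y : 𝒳 i, p (update x i y) (update r i b)) * hr
    - (∑ y : 𝒳 i, p (update x i y) r) * hb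

variable [IsStrictOrderedRing R]

/-- The odds `p(x, r) / p(x, r')` of two patterns which differ only in item `i` do not depend on
`x_i`. -/
lemma mul_update_comm (h : ItemCondIndep i p) (hp : ∀ x r, 0 ≤ p x r) {b : Bool}
    (hpos : 0 < p x (update r i b)) (y : 𝒳 i) :
    p x r * p (update x i y) (update r i b) = p (update x i y) r * p x (update r i b) := by
  have hmarg : 0 < itemMarginal i p x r := by
    rw [← itemMarginal_update_right p x r b]
    exact itemMarginal_pos hp hpos
  have hx := h.mul_sum_update hmarg b
  have hy := h.mul_sum_update (x := update x i y) (by rwa [itemMarginal_update_left]) b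
  simp only [update_idem] at hy
  have hsum : 0 < ∑ z : 𝒳 i, p (update x i z) (update r i b) :=
    sum_update_pos (f := (p · (update r i b))) (hp · _) hpos
  apply mul_right_cancel₀ hsum.ne'
  linear_combination p (update x i y) (update r i b) * hx - p x (update r i b) * hy

lemma eq_const_mul_update (hp : ∀ x r, 0 ≤ p x r) (hq : ∀ x r, 0 ≤ q x r)
    (hpi : ItemCondIndep i p) (hqi : ItemCondIndep i q) {b : Bool}
    (heq : ∀ x, p x (update r i b) = q x (update r i b)) (hpos : 0 < q x (update r i b))
    {c : R} (hc : p x r = c * q x r) (y : 𝒳 i) :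
    p (update x i y) r = c * q (update x i y) r := by
  have hpodds := hpi.mul_update_comm hp (heq x ▸ hpos) y
  have hqodds := hqi.mul_update_comm hq hpos y
  rw [heq, heq, hc] at hpodds
  apply mul_right_cancel₀ hpos.ne'
  linear_combination c * hqodds - hpodds

end ItemCondIndep

end ItemCondIndep

variable {R : Type*} [DecidableEq ι]

/-- Whenever the pattern `r` occurs together with the observed values `x_{O(r)}`, so does every
pattern observing one item more, together with every completion of `x_{O(r)}`. It takes
the place of strict positivity in the identification of laws with structural zeros. -/
def SupportExtends [Zero R] [LT R] (q : (∀ i, 𝒳 i) → (ι → Bool) → R) : Prop :=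
  ∀ x r, 0 < q x r → ∀ i, r i = false →
    ∀ x', AgreeOnObserved r x' x → 0 < q x' (update r i true)

lemma eq_of_agreeOnObserved_of_pos [Fintype ι] [∀ i, Fintype (𝒳 i)]
    [Field R] [LinearOrder R] [IsStrictOrderedRing R]
    {p q : (∀ i, 𝒳 i) → (ι → Bool) → R} {r : ι → Bool} {x : ∀ i, 𝒳 i}
    (hp : ∀ x r, 0 ≤ p x r) (hq : ∀ x r, 0 ≤ q x r) (hsupp : SupportExtends q)
    (hpi : ∀ i, ItemCondIndep i p) (hqi : ∀ i, ItemCondIndep i q)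
    (hobs : observedLaw p r x = observedLaw q r x)
    (heq : ∀ i, r i = false → ∀ x, p x (update r i true) = q x (update r i true))
    (hpos : 0 < q x r) {z : ∀ i, 𝒳 i} (hz : AgreeOnObserved r z x) : p z r = q z r := by
  obtain ⟨c, hc⟩ : ∃ c, p x r = c * q x r := ⟨p x r / q x r, (div_mul_cancel₀ _ hpos.ne').symm⟩
  have hprop : ∀ w, AgreeOnObserved r w x → p w r = c * q w r := fun _ hw ↦
    hw.induction_update hc fun v hv i hi y hvc ↦
      (hpi i).eq_const_mul_update hp hq (hqi i) (heq i hi) (hsupp x r hpos i hi v hv) hvc y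
  have hobs_pos : 0 < observedLaw q r x := hpos.trans_le (le_observedLaw (hq · r) x)
  have hc_one : c = 1 :=
    mul_right_cancel₀ hobs_pos.ne' (by rw [← observedLaw_eq_mul hprop, hobs, one_mul])
  rw [hprop z hz, hc_one, one_mul]

end MissingData

open MissingData in
theorem pm_id_soundness_strict_positivity_general
    {ι : Type*} [Fintype ι] [DecidableEq ι]
    {𝒳 : ι → Type*} [∀ i, Fintype (𝒳 i)]
    {R : Type*} [Field R] [LinearOrder R] [IsStrictOrderedRing R]
    {p q : (∀ i, 𝒳 i) → (ι → Bool) → R}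
    (hp : ∀ x r, 0 ≤ p x r) (hq : ∀ x r, 0 ≤ q x r) (hsupp : SupportExtends q)
    (hobs : ∀ r x, observedLaw p r x = observedLaw q r x)
    (hpi : ∀ i, ItemCondIndep i p) (hqi : ∀ i, ItemCondIndep i q)
    (x : ∀ i, 𝒳 i) (r : ι → Bool) : p x r = q x r := by
  induction r using WellFoundedGT.induction generalizing x with
  | ind r ih =>
  have heq : ∀ i, r i = false → ∀ x, p x (update r i true) = q x (update r i true) :=
    fun i hi x ↦ ih _ (lt_update_self_iff.2 (by simp [hi])) x
  by_cases hpos : ∃ z, AgreeOnObserved r x z ∧ 0 < q z r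
  · obtain ⟨z, hxz, hz⟩ := hpos
    exact eq_of_agreeOnObserved_of_pos hp hq hsupp hpi hqi (hobs r z) heq hz hxz
  · have hq_zero : ∀ z, AgreeOnObserved r z x → q z r = 0 := fun z hz ↦
      (hq z r).antisymm' (not_lt.1 fun h ↦ hpos ⟨z, fun i hi ↦ (hz i hi).symm, h⟩)
    have hobs_zero : observedLaw q r x = 0 := by
      rw [observedLaw_eq_mul (q := q) (c := 0) (by simpa using hq_zero), zero_mul]
    have hp_le : p x r ≤ 0 := by
      rw [← hobs_zero, ← hobs]
      exact le_observedLaw (hp · r) x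
    rw [hq_zero x fun _ _ ↦ rfl, hp_le.antisymm (hp x r)]

/-- Soundness of PM-ID under strict positivity: two strictly positive full
laws with the same observed law under which the itemwise conditional independences
`X_i ⊥ R_i | X_{-i}, R_{-i}, O` hold must be equal. -/
theorem pm_id_soundness_strict_positivity
    (K : ℕ) (hK : 1 ≤ K)
    (𝒳 : Fin K → Type) [∀ i, Fintype (𝒳 i)] [∀ i, Nonempty (𝒳 i)]
    [∀ i, DecidableEq (𝒳 i)]
    (𝒪 : Type) [Fintype 𝒪] [Nonempty 𝒪]
    (p q : (∀ i, 𝒳 i) → 𝒪 → (Fin K → Bool) → ℝ)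
    -- `p` and `q` are strictly positive probability mass functions (full laws)
    (hp_pos : ∀ x o r, 0 < p x o r)
    (hp_sum : ∑ x : ∀ i, 𝒳 i, ∑ o : 𝒪, ∑ r : Fin K → Bool, p x o r = 1)
    (hq_pos : ∀ x o r, 0 < q x o r)
    (hq_sum : ∑ x : ∀ i, 𝒳 i, ∑ o : 𝒪, ∑ r : Fin K → Bool, q x o r = 1)
    -- `p` and `q` have the same observed law
    (h_obs : ∀ (r : Fin K → Bool) (o : 𝒪) (x : ∀ i, 𝒳 i),
      (∑ x' : ∀ i, 𝒳 i, if ∀ i, r i = true → x' i = x i then p x' o r else 0)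
        = ∑ x' : ∀ i, 𝒳 i, if ∀ i, r i = true → x' i = x i then q x' o r else 0)
    -- `X_i ⊥ R_i | X_{-i}, R_{-i}, O` under `p`
    (hCI_p : ∀ (i : Fin K) (x : ∀ j, 𝒳 j) (o : 𝒪) (r : Fin K → Bool),
      0 < (∑ y : 𝒳 i, ∑ b : Bool, p (Function.update x i y) o (Function.update r i b)) →
      p x o r
          / (∑ y : 𝒳 i, ∑ b : Bool, p (Function.update x i y) o (Function.update r i b))
        = ((∑ b : Bool, p x o (Function.update r i b))
            / (∑ y : 𝒳 i, ∑ b : Bool, p (Function.update x i y) o (Function.update r i b)))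
          * ((∑ y : 𝒳 i, p (Function.update x i y) o r)
            / (∑ y : 𝒳 i, ∑ b : Bool, p (Function.update x i y) o (Function.update r i b))))
    -- `X_i ⊥ R_i | X_{-i}, R_{-i}, O` under `q`
    (hCI_q : ∀ (i : Fin K) (x : ∀ j, 𝒳 j) (o : 𝒪) (r : Fin K → Bool),
      0 < (∑ y : 𝒳 i, ∑ b : Bool, q (Function.update x i y) o (Function.update r i b)) →
      q x o r
          / (∑ y : 𝒳 i, ∑ b : Bool, q (Function.update x i y) o (Function.update r i b))
        = ((∑ b : Bool, q x o (Function.update r i b))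
            / (∑ y : 𝒳 i, ∑ b : Bool, q (Function.update x i y) o (Function.update r i b)))
          * ((∑ y : 𝒳 i, q (Function.update x i y) o r)
            / (∑ y : 𝒳 i, ∑ b : Bool, q (Function.update x i y) o (Function.update r i b)))) :
    ∀ (x : ∀ i, 𝒳 i) (o : 𝒪) (r : Fin K → Bool), p x o r = q x o r := by
  refine fun x o ↦ pm_id_soundness_strict_positivity_general
    (fun x r ↦ (hp_pos x o r).le) (fun x r ↦ (hq_pos x o r).le) (fun _ _ _ _ _ _ _ ↦ hq_pos _ o _)
    (fun r x ↦ ?_) (fun i x ↦ hCI_p i x o) (fun i x ↦ hCI_q i x o) x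
  unfold MissingData.observedLaw MissingData.AgreeOnObserved
  -- only the decidability instances differ
  convert h_obs r o x
end

section
/- Let S be a nonempty finite index set and 𝒳_i a nonempty finite set for each i ∈ S. Let p and q be strictly positive probability mass functions on ∏_{i ∈ S} 𝒳_i. If for every i ∈ S and every x ∈ ∏_{i ∈ S} 𝒳_i the full conditionals agree, p(X_i = x_i | X_{-i} = x_{-i}) = q(X_i = x_i | X_{-i} = x_{-i}), then p = q. (A strictly positive joint distribution on a finite product is determined by its Gibbs factors.) -/
/-!
Agreement of the full conditionals at `i` says that `p x / q x` equals the ratio of the marginals of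
`X_{-i}` under `p` and `q`, which does not see the coordinate `x i`. Moving from any point to any
other one coordinate at a time, `p / q` is constant, and equality of the total masses makes it `1`.
-/

theorem eq_of_forall_div_eq_div_of_sum_eq {α K : Type*} [Semifield K] [Fintype α]
    {f g : α → K} (hg : ∀ x, g x ≠ 0) (hfg : ∀ x z, f x / g x = f z / g z)
    (hsum : ∑ x, f x = ∑ x, g x) (hsum_ne : ∑ x, g x ≠ 0) : f = g := by
  funext z
  have scaled : f z / g z * ∑ x, g x = 1 * ∑ x, g x :=
    calc f z / g z * ∑ x, g x = ∑ x, f z / g z * g x := Finset.mul_sum _ _ _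
      _ = ∑ x, f x := Finset.sum_congr rfl fun x _ => by rw [hfg z x, div_mul_cancel₀ _ (hg x)]
      _ = 1 * ∑ x, g x := by rw [hsum, one_mul]
  exact (div_eq_one_iff_eq (hg z)).1 (mul_right_cancel₀ hsum_ne scaled)

section

variable {S : Type*} [DecidableEq S] {𝒳 : S → Type*}

theorem eq_of_forall_update_eq [Finite S] {β : Type*} {f : (∀ i, 𝒳 i) → β}
    (hf : ∀ i x a, f (Function.update x i a) = f x) (x z : ∀ i, 𝒳 i) : f x = f z := by
  have := Fintype.ofFinite S
  have agree (s : Finset S) : f (s.piecewise x z) = f z := by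
    induction s using Finset.induction_on with
    | empty => rw [Finset.piecewise_empty]
    | insert i s _ ih => rw [Finset.piecewise_insert, hf, ih]
  simpa only [Finset.piecewise_univ] using agree Finset.univ

variable [∀ i, Fintype (𝒳 i)]

/-- The marginal weight of `X_{-i} = x_{-i}` under `p`, the denominator of the full conditional at
`i`. It is encoded as a function of the whole point `x`, whose coordinate `x i` is irrelevant. -/
def marginalExcept {R : Type*} [AddCommMonoid R] (p : (∀ i, 𝒳 i) → R) (i : S)
    (x : ∀ j, 𝒳 j) : R :=
  ∑ y : 𝒳 i, p (Function.update x i y)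

theorem marginalExcept_update {R : Type*} [AddCommMonoid R] (p : (∀ i, 𝒳 i) → R) (i : S)
    (x : ∀ j, 𝒳 j) (a : 𝒳 i) :
    marginalExcept p i (Function.update x i a) = marginalExcept p i x := by
  simp only [marginalExcept, Function.update_idem]

theorem marginalExcept_ne_zero_of_pos {R : Type*} [AddCommMonoid R] [PartialOrder R]
    [IsOrderedCancelAddMonoid R] {p : (∀ i, 𝒳 i) → R} (hp : ∀ x, 0 < p x) (i : S)
    (x : ∀ j, 𝒳 j) : marginalExcept p i x ≠ 0 :=
  (Finset.sum_pos (fun _ _ => hp _) ⟨x i, Finset.mem_univ _⟩).ne'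

variable {K : Type*} [Semifield K] {p q : (∀ i, 𝒳 i) → K}

theorem div_update_eq_div (hq : ∀ x, q x ≠ 0) {i : S} (hqi : ∀ x, marginalExcept q i x ≠ 0)
    (h : ∀ x, p x * marginalExcept q i x = q x * marginalExcept p i x)
    (x : ∀ j, 𝒳 j) (a : 𝒳 i) :
    p (Function.update x i a) / q (Function.update x i a) = p x / q x := by
  have ratio (z : ∀ j, 𝒳 j) : p z / q z = marginalExcept p i z / marginalExcept q i z := by
    rw [div_eq_div_iff (hq z) (hqi z), h z, mul_comm]
  rw [ratio, ratio, marginalExcept_update, marginalExcept_update]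

-- The full conditionals are compared after cross-multiplication, so that a vanishing marginal of
-- `p` causes no division by zero.
theorem positive_pmf_determined_by_full_conditionals_general [Fintype S]
    (hq : ∀ x, q x ≠ 0) (hq_marginal : ∀ i x, marginalExcept q i x ≠ 0)
    (hsum : ∑ x, p x = ∑ x, q x) (hsum_ne : ∑ x, q x ≠ 0)
    (h : ∀ i x, p x * marginalExcept q i x = q x * marginalExcept p i x) : p = q :=
  have ratio_const : ∀ x z, p x / q x = p z / q z :=
    eq_of_forall_update_eq fun i => div_update_eq_div hq (hq_marginal i) (h i)
  eq_of_forall_div_eq_div_of_sum_eq hq ratio_const hsum hsum_ne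

end

/-- A strictly positive joint distribution on a finite product is
determined by its full conditionals (Gibbs factors). -/
theorem positive_pmf_determined_by_full_conditionals
    (S : Type) [Fintype S] [Nonempty S] [DecidableEq S]
    (𝒳 : S → Type) [∀ i, Fintype (𝒳 i)] [∀ i, Nonempty (𝒳 i)]
    (p q : (∀ i, 𝒳 i) → ℝ)
    (hp_pos : ∀ x, 0 < p x) (hp_sum : ∑ x : ∀ i, 𝒳 i, p x = 1)
    (hq_pos : ∀ x, 0 < q x) (hq_sum : ∑ x : ∀ i, 𝒳 i, q x = 1)
    (h_cond : ∀ (i : S) (x : ∀ j, 𝒳 j),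
      p x / (∑ y : 𝒳 i, p (Function.update x i y))
        = q x / (∑ y : 𝒳 i, q (Function.update x i y))) :
    p = q :=
  positive_pmf_determined_by_full_conditionals_general (fun x => (hq_pos x).ne')
    (marginalExcept_ne_zero_of_pos hq_pos) (hp_sum.trans hq_sum.symm) (hq_sum ▸ one_ne_zero)
    fun i x => (div_eq_div_iff (marginalExcept_ne_zero_of_pos hp_pos i x)
      (marginalExcept_ne_zero_of_pos hq_pos i x)).1 (h_cond i x)
end

section
/- Let 𝒜, ℬ, 𝒞 be nonempty finite sets, let p be a strictly positive probability mass function on 𝒜 × ℬ × 𝒞, and fix reference values a_0 ∈ 𝒜, b_0 ∈ ℬ. Let Z(c) = ∑_{a ∈ 𝒜, b ∈ ℬ} p(a | b_0, c)·p(b | a_0, c)·OR(a, b | c). Then for all a, b, c: p(a, b | c) = (1/Z(c))·p(a | b_0, c)·p(b | a_0, c)·OR(a, b | c). (Odds ratio factorization of a joint conditional distribution.) -/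
/-- `p(a | b, c)` -/
noncomputable def condA {𝒜 ℬ 𝒞 : Type} [Fintype 𝒜]
    (p : 𝒜 → ℬ → 𝒞 → ℝ) (a : 𝒜) (b : ℬ) (c : 𝒞) : ℝ :=
  p a b c / ∑ a' : 𝒜, p a' b c

/-- `p(b | a, c)` -/
noncomputable def condB {𝒜 ℬ 𝒞 : Type} [Fintype ℬ]
    (p : 𝒜 → ℬ → 𝒞 → ℝ) (a : 𝒜) (b : ℬ) (c : 𝒞) : ℝ :=
  p a b c / ∑ b' : ℬ, p a b' c

/-- `p(a, b | c)` -/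
noncomputable def condAB {𝒜 ℬ 𝒞 : Type} [Fintype 𝒜] [Fintype ℬ]
    (p : 𝒜 → ℬ → 𝒞 → ℝ) (a : 𝒜) (b : ℬ) (c : 𝒞) : ℝ :=
  p a b c / ∑ a' : 𝒜, ∑ b' : ℬ, p a' b' c

/-- `OR(a, b | c) = [p(a|b,c)/p(a0|b,c)] · [p(a0|b0,c)/p(a|b0,c)]` -/
noncomputable def oddsRatio {𝒜 ℬ 𝒞 : Type} [Fintype 𝒜]
    (p : 𝒜 → ℬ → 𝒞 → ℝ) (a0 : 𝒜) (b0 : ℬ) (a : 𝒜) (b : ℬ) (c : 𝒞) : ℝ :=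
  (condA p a b c / condA p a0 b c) * (condA p a0 b0 c / condA p a b0 c)

/-- `Z(c) = ∑_{a,b} p(a|b0,c)·p(b|a0,c)·OR(a,b|c)` -/
noncomputable def orZ {𝒜 ℬ 𝒞 : Type} [Fintype 𝒜] [Fintype ℬ]
    (p : 𝒜 → ℬ → 𝒞 → ℝ) (a0 : 𝒜) (b0 : ℬ) (c : 𝒞) : ℝ :=
  ∑ a : 𝒜, ∑ b : ℬ, condA p a b0 c * condB p a0 b c * oddsRatio p a0 b0 a b c

/-!
Within a ratio of two values of `p(· | b, c)` the normalization cancels, so `OR(a, b | c)` is the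
cross-product ratio `p(a,b,c) p(a₀,b₀,c) / (p(a₀,b,c) p(a,b₀,c))`. Multiplying by `p(a | b₀, c)` and
`p(b | a₀, c)` cancels its denominator and leaves `p(a,b,c)` times a factor depending only on `c`.
Normalizing over `(a, b)` removes that factor.
-/

section

variable {𝒜 ℬ 𝒞 : Type} [Fintype 𝒜] {p : 𝒜 → ℬ → 𝒞 → ℝ} {a0 : 𝒜} {b0 : ℬ} {c : 𝒞}

theorem condA_div_condA {b : ℬ} (hA : ∑ a', p a' b c ≠ 0) (a₁ a₂ : 𝒜) :
    condA p a₁ b c / condA p a₂ b c = p a₁ b c / p a₂ b c :=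
  div_div_div_cancel_right₀ hA _ _

theorem oddsRatio_eq_div {b : ℬ} (hA : ∑ a', p a' b c ≠ 0) (hA0 : ∑ a', p a' b0 c ≠ 0) (a : 𝒜) :
    oddsRatio p a0 b0 a b c = p a b c * p a0 b0 c / (p a0 b c * p a b0 c) := by
  rw [oddsRatio, condA_div_condA hA, condA_div_condA hA0, div_mul_div_comm]

variable [Fintype ℬ]

theorem condA_mul_condB_mul_oddsRatio {a : 𝒜} {b : ℬ}
    (hA : ∑ a', p a' b c ≠ 0) (hA0 : ∑ a', p a' b0 c ≠ 0)
    (hb0 : p a b0 c ≠ 0) (ha0 : p a0 b c ≠ 0) :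
    condA p a b0 c * condB p a0 b c * oddsRatio p a0 b0 a b c
      = condA p a0 b0 c / (∑ b', p a0 b' c) * p a b c := by
  rw [oddsRatio_eq_div hA hA0, condA, condA, condB]
  field_simp

theorem orZ_eq_mul_sum (hA : ∀ b, ∑ a', p a' b c ≠ 0)
    (hb0 : ∀ a, p a b0 c ≠ 0) (ha0 : ∀ b, p a0 b c ≠ 0) :
    orZ p a0 b0 c = condA p a0 b0 c / (∑ b', p a0 b' c) * ∑ a, ∑ b, p a b c := by
  simp only [orZ, condA_mul_condB_mul_oddsRatio (hA _) (hA b0) (hb0 _) (ha0 _), Finset.mul_sum]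

theorem odds_ratio_factorization_general (hp : ∀ a b, 0 ≤ p a b c)
    (hb0 : ∀ a, 0 < p a b0 c) (ha0 : ∀ b, 0 < p a0 b c) (a : 𝒜) (b : ℬ) :
    condAB p a b c
      = (1 / orZ p a0 b0 c) * condA p a b0 c * condB p a0 b c * oddsRatio p a0 b0 a b c := by
  have hA (b : ℬ) : 0 < ∑ a', p a' b c :=
    Finset.sum_pos' (fun a' _ => hp a' b) ⟨a0, Finset.mem_univ a0, ha0 b⟩
  have hB : 0 < ∑ b', p a0 b' c := Finset.sum_pos (fun b' _ => ha0 b') ⟨b0, Finset.mem_univ b0⟩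
  set K := condA p a0 b0 c / ∑ b', p a0 b' c
  have hK_pos : 0 < K := div_pos (div_pos (ha0 b0) (hA b0)) hB
  calc condAB p a b c
      = K * p a b c / (K * ∑ a', ∑ b', p a' b' c) := (mul_div_mul_left _ _ hK_pos.ne').symm
    _ = condA p a b0 c * condB p a0 b c * oddsRatio p a0 b0 a b c / orZ p a0 b0 c := by
      rw [orZ_eq_mul_sum (fun b' => (hA b').ne') (fun a' => (hb0 a').ne') (fun b' => (ha0 b').ne'),
        condA_mul_condB_mul_oddsRatio (hA b).ne' (hA b0).ne' (hb0 a).ne' (ha0 b).ne']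
    _ = (1 / orZ p a0 b0 c) * condA p a b0 c * condB p a0 b c * oddsRatio p a0 b0 a b c := by
      ring

end

/-- Odds ratio factorization of a joint conditional distribution:
`p(a, b | c) = (1/Z(c)) · p(a | b0, c) · p(b | a0, c) · OR(a, b | c)`. -/
theorem odds_ratio_factorization
    (𝒜 ℬ 𝒞 : Type) [Fintype 𝒜] [Fintype ℬ] [Fintype 𝒞]
    [Nonempty 𝒜] [Nonempty ℬ] [Nonempty 𝒞]
    (p : 𝒜 → ℬ → 𝒞 → ℝ)
    (hpos : ∀ a b c, 0 < p a b c)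
    (hsum : ∑ a : 𝒜, ∑ b : ℬ, ∑ c : 𝒞, p a b c = 1)
    (a0 : 𝒜) (b0 : ℬ) :
    ∀ (a : 𝒜) (b : ℬ) (c : 𝒞),
      condAB p a b c
        = (1 / orZ p a0 b0 c) * condA p a b0 c * condB p a0 b c
          * oddsRatio p a0 b0 a b c := by
  intro a b c
  exact odds_ratio_factorization_general (fun a' b' => (hpos a' b' c).le)
    (fun a' => hpos a' b0 c) (fun b' => hpos a0 b' c) a b
end

section
/- Let p be a strictly positive full law, i.e., p(X = x, O = o, R = r) > 0 for all x, o, r. For k ∈ {1,…,K} write R_{≺k} = (R_1,…,R_{k-1}), R_{≻k} = (R_{k+1},…,R_K), R_{-k} = all coordinates of R except the k-th, and define OR_k(r_k, r_{≺k} | x, o) = [p(R_k = r_k | R_{≺k} = r_{≺k}, R_{≻k} = 1, X = x, O = o)/p(R_k = 1 | R_{≺k} = r_{≺k}, R_{≻k} = 1, X = x, O = o)] · [p(R_k = 1 | R_{≺k} = 1, R_{≻k} = 1, X = x, O = o)/p(R_k = r_k | R_{≺k} = 1, R_{≻k} = 1, X = x, O = o)], and Z(x, o) = ∑_{r ∈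 {0,1}^K} ∏_{k=1}^K p(R_k = r_k | R_{-k} = 1, X = x, O = o) · ∏_{k=2}^K OR_k(r_k, r_{≺k} | x, o). Then for every pattern r and all x, o: p(R = r | X = x, O = o) = (1/Z(x, o)) · ∏_{k=1}^K p(R_k = r_k | R_{-k} = 1, X = x, O = o) · ∏_{k=2}^K OR_k(r_k, r_{≺k} | x, o). (Recursive odds ratio factorization of the missingness mechanism with reference value 1 for each indicator.) -/
/-- The pattern equal to `r` on coordinates `j ≺ k`, equal to `b` at `k`, and equal to
`1` (true) on coordinates `j ≻ k`. -/
def mixPat {K : ℕ} (r : Fin K → Bool) (k : Fin K) (b : Bool) : Fin K → Bool :=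
  fun j => if j < k then r j else if j = k then b else true

/-- `p(R_k = b | R_{≺k} = r_{≺k}, R_{≻k} = 1, X = x, O = o)`. -/
noncomputable def condRk {K : ℕ} {𝒳 : Fin K → Type} {𝒪 : Type}
    (p : (∀ i, 𝒳 i) → 𝒪 → (Fin K → Bool) → ℝ)
    (x : ∀ i, 𝒳 i) (o : 𝒪) (r : Fin K → Bool) (k : Fin K) (b : Bool) : ℝ :=
  p x o (mixPat r k b) / ∑ b' : Bool, p x o (mixPat r k b')

/-- `p(R_k = b | R_{-k} = 1, X = x, O = o)`. -/
noncomputable def condRkRef {K : ℕ} {𝒳 : Fin K → Type} {𝒪 : Type}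
    (p : (∀ i, 𝒳 i) → 𝒪 → (Fin K → Bool) → ℝ)
    (x : ∀ i, 𝒳 i) (o : 𝒪) (k : Fin K) (b : Bool) : ℝ :=
  p x o (fun j => if j = k then b else true)
    / ∑ b' : Bool, p x o (fun j => if j = k then b' else true)

/-- `OR_k(r_k, r_{≺k} | x, o)` with reference value `1` for each indicator. -/
noncomputable def ORk {K : ℕ} {𝒳 : Fin K → Type} {𝒪 : Type}
    (p : (∀ i, 𝒳 i) → 𝒪 → (Fin K → Bool) → ℝ)
    (x : ∀ i, 𝒳 i) (o : 𝒪) (r : Fin K → Bool) (k : Fin K) : ℝ :=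
  (condRk p x o r k (r k) / condRk p x o r k true)
    * (condRk p x o (fun _ => true) k true / condRk p x o (fun _ => true) k (r k))

/-- `Z(x, o)`, the normalizing function of the odds ratio factorization. -/
noncomputable def orZmiss {K : ℕ} {𝒳 : Fin K → Type} {𝒪 : Type} [∀ i, Fintype (𝒳 i)]
    (p : (∀ i, 𝒳 i) → 𝒪 → (Fin K → Bool) → ℝ)
    (x : ∀ i, 𝒳 i) (o : 𝒪) : ℝ :=
  ∑ r : Fin K → Bool,
    (∏ k : Fin K, condRkRef p x o k (r k))
      * ∏ k ∈ Finset.univ.filter (fun k : Fin K => k.val ≠ 0), ORk p x o r k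

/-!
Setting the coordinates of the all-ones pattern to those of `r` one at a time, from first to last,
gives a chain of patterns from `1` to `r` along which the ratios of successive probabilities
telescope to `p(r) / p(1)`. The `k`-th ratio is the conditional odds of `R_k = r_k` against
`R_k = 1` given `R_{≺k} = r_{≺k}` and `R_{≻k} = 1`. The odds ratio `OR_k` is exactly what turns the
reference odds, conditional on `R_{-k} = 1`, into these odds. Hence the product of reference
conditionals and odds ratios is proportional to `p(r)` with a constant independent of `r`, and
normalizing removes the constant.
-/

/-- The configuration that agrees with `r` on the first `n` coordinates and with the reference
configuration `a` on the others, interpolating from `a` at `n = 0` to `r` at `n = K`. The cut `n` is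
a natural number rather than a `Fin K` so that both endpoints are included. -/
def splice {K : ℕ} {α : Fin K → Type*} (n : ℕ) (r a : ∀ i, α i) : ∀ i, α i :=
  fun i => if i.val < n then r i else a i

section Splice

variable {K : ℕ} {α : Fin K → Type*}

@[simp]
lemma splice_zero (r a : ∀ i, α i) : splice 0 r a = a := by
  funext i
  simp [splice]

@[simp]
lemma splice_length (r a : ∀ i, α i) : splice K r a = r := by
  funext i
  simp [splice]

lemma prod_div_splice {G : Type*} [CommGroupWithZero G] {w : (∀ i, α i) → G}
    (hw : ∀ r, w r ≠ 0) (r a : ∀ i, α i) :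
    ∏ k : Fin K, w (splice (k + 1) r a) / w (splice k r a) = w r / w a := by
  have telescope : ∏ n ∈ Finset.range K, w (splice (n + 1) r a) / w (splice n r a)
      = w (splice K r a) / w a :=
    Finset.prod_range_induction _ (fun n => w (splice n r a) / w a)
      (by simp [hw a]) K (fun n _ => by rw [mul_comm, div_mul_div_cancel₀ (hw _)])
  rw [Fin.prod_univ_eq_prod_range (fun n => w (splice (n + 1) r a) / w (splice n r a)) K,
    telescope, splice_length]

end Splice

section MixPat

variable {K : ℕ} (r : Fin K → Bool) (k : Fin K)

lemma mixPat_self : mixPat r k (r k) = splice (k + 1) r (fun _ => true) := by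
  funext j
  simp only [mixPat, splice]
  grind

lemma mixPat_true : mixPat r k true = splice k r (fun _ => true) := by
  funext j
  simp [mixPat, splice]

lemma mixPat_ones (b : Bool) :
    mixPat (fun _ => true) k b = fun j => if j = k then b else true := by
  funext j
  simp only [mixPat]
  grind

lemma mixPat_of_val_eq_zero {k : Fin K} (hk : k.val = 0) :
    mixPat r k = mixPat (fun _ => true) k := by
  funext b j
  have not_lt : ¬ j < k := by rw [Fin.lt_def]; omega
  simp [mixPat, not_lt]

end MixPat

/-- The unnormalized odds ratio factorization of `p(R = r | X = x, O = o)`, that is, the summand of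
the normalizing function `Z(x, o)`. -/
noncomputable def oddsRatioWeight {K : ℕ} {𝒳 : Fin K → Type} {𝒪 : Type}
    (p : (∀ i, 𝒳 i) → 𝒪 → (Fin K → Bool) → ℝ)
    (x : ∀ i, 𝒳 i) (o : 𝒪) (r : Fin K → Bool) : ℝ :=
  (∏ k : Fin K, condRkRef p x o k (r k))
    * ∏ k ∈ Finset.univ.filter (fun k : Fin K => k.val ≠ 0), ORk p x o r k

section Factorization

variable {K : ℕ} {𝒳 : Fin K → Type} {𝒪 : Type}
  {p : (∀ i, 𝒳 i) → 𝒪 → (Fin K → Bool) → ℝ} {x : ∀ i, 𝒳 i} {o : 𝒪}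

lemma condRkRef_eq_condRk (k : Fin K) (b : Bool) :
    condRkRef p x o k b = condRk p x o (fun _ => true) k b := by
  simp only [condRkRef, condRk, mixPat_ones]

lemma sum_mixPat_pos (hp : ∀ r, 0 < p x o r) (r : Fin K → Bool) (k : Fin K) :
    0 < ∑ b : Bool, p x o (mixPat r k b) :=
  Finset.sum_pos (fun _ _ => hp _) Finset.univ_nonempty

lemma condRk_pos (hp : ∀ r, 0 < p x o r) (r : Fin K → Bool) (k : Fin K) (b : Bool) :
    0 < condRk p x o r k b :=
  div_pos (hp _) (sum_mixPat_pos hp r k)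

lemma condRkRef_pos (hp : ∀ r, 0 < p x o r) (k : Fin K) (b : Bool) :
    0 < condRkRef p x o k b := by
  rw [condRkRef_eq_condRk]
  exact condRk_pos hp _ k b

lemma condRk_div_condRk (hp : ∀ r, 0 < p x o r) (r : Fin K → Bool) (k : Fin K) (b c : Bool) :
    condRk p x o r k b / condRk p x o r k c = p x o (mixPat r k b) / p x o (mixPat r k c) :=
  div_div_div_cancel_right₀ (sum_mixPat_pos hp r k).ne' _ _

lemma condRkRef_mul_ORk (hp : ∀ r, 0 < p x o r) (r : Fin K → Bool) (k : Fin K) :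
    condRkRef p x o k (r k) * ORk p x o r k
      = condRkRef p x o k true
        * (p x o (splice (k + 1) r fun _ => true) / p x o (splice k r fun _ => true)) := by
  have ref_ne : condRkRef p x o k (r k) ≠ 0 := (condRkRef_pos hp k _).ne'
  rw [ORk, condRk_div_condRk hp, mixPat_self, mixPat_true, ← condRkRef_eq_condRk,
    ← condRkRef_eq_condRk, mul_left_comm, mul_div_cancel₀ _ ref_ne, mul_comm]

lemma ORk_of_val_eq_zero (hp : ∀ r, 0 < p x o r) (r : Fin K → Bool) {k : Fin K}
    (hk : k.val = 0) : ORk p x o r k = 1 := by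
  have condRk_eq (b : Bool) : condRk p x o r k b = condRk p x o (fun _ => true) k b := by
    simp only [condRk, mixPat_of_val_eq_zero r hk]
  rw [ORk, condRk_eq, condRk_eq, div_mul_div_cancel₀ (condRk_pos hp _ k true).ne',
    div_self (condRk_pos hp _ k (r k)).ne']

lemma prod_ORk_filter (hp : ∀ r, 0 < p x o r) (r : Fin K → Bool) :
    ∏ k ∈ Finset.univ.filter (fun k : Fin K => k.val ≠ 0), ORk p x o r k
      = ∏ k : Fin K, ORk p x o r k :=
  Finset.prod_filter_of_ne fun _ _ hne hk => hne (ORk_of_val_eq_zero hp r hk)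

lemma oddsRatioWeight_eq_const_mul (hp : ∀ r, 0 < p x o r) (r : Fin K → Bool) :
    oddsRatioWeight p x o r
      = (∏ k : Fin K, condRkRef p x o k true) / p x o (fun _ => true) * p x o r :=
  calc oddsRatioWeight p x o r
      = ∏ k : Fin K, condRkRef p x o k (r k) * ORk p x o r k := by
        rw [oddsRatioWeight, prod_ORk_filter hp, Finset.prod_mul_distrib]
    _ = (∏ k : Fin K, condRkRef p x o k true)
          * ∏ k : Fin K,
              p x o (splice (k + 1) r fun _ => true) / p x o (splice k r fun _ => true) := by
        simp only [condRkRef_mul_ORk hp, Finset.prod_mul_distrib]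
    _ = (∏ k : Fin K, condRkRef p x o k true) * (p x o r / p x o (fun _ => true)) := by
        rw [prod_div_splice fun r => (hp r).ne']
    _ = (∏ k : Fin K, condRkRef p x o k true) / p x o (fun _ => true) * p x o r := by
        rw [mul_div_assoc', div_mul_eq_mul_div]

theorem odds_ratio_factorization_missingness_general (hp : ∀ r, 0 < p x o r)
    (r : Fin K → Bool) :
    p x o r / ∑ r' : Fin K → Bool, p x o r'
      = oddsRatioWeight p x o r / ∑ r' : Fin K → Bool, oddsRatioWeight p x o r' := by
  have const_ne : (∏ k : Fin K, condRkRef p x o k true) / p x o (fun _ => true) ≠ 0 :=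
    (div_pos (Finset.prod_pos fun k _ => condRkRef_pos hp k true) (hp _)).ne'
  simp only [oddsRatioWeight_eq_const_mul hp, ← Finset.mul_sum]
  exact (mul_div_mul_left _ _ const_ne).symm

end Factorization

/-- Recursive odds ratio factorization of the missingness mechanism
`p(R = r | X = x, O = o)` with reference value `1` for each indicator. -/
theorem odds_ratio_factorization_missingness
    (K : ℕ) (hK : 1 ≤ K)
    (𝒳 : Fin K → Type) [∀ i, Fintype (𝒳 i)] [∀ i, Nonempty (𝒳 i)]
    (𝒪 : Type) [Fintype 𝒪] [Nonempty 𝒪]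
    (p : (∀ i, 𝒳 i) → 𝒪 → (Fin K → Bool) → ℝ)
    -- `p` is a strictly positive probability mass function (full law)
    (hp_pos : ∀ x o r, 0 < p x o r)
    (hp_sum : ∑ x : ∀ i, 𝒳 i, ∑ o : 𝒪, ∑ r : Fin K → Bool, p x o r = 1) :
    ∀ (r : Fin K → Bool) (x : ∀ i, 𝒳 i) (o : 𝒪),
      p x o r / (∑ r' : Fin K → Bool, p x o r')
        = (1 / orZmiss p x o)
          * (∏ k : Fin K, condRkRef p x o k (r k))
          * ∏ k ∈ Finset.univ.filter (fun k : Fin K => k.val ≠ 0), ORk p x o r k := by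
  intro r x o
  rw [mul_assoc, one_div_mul_eq_div]
  exact odds_ratio_factorization_missingness_general (hp_pos x o) r
end

section
/- Let 𝒳_1, 𝒳_2 be nonempty finite sets and let p be a probability mass function on 𝒳_1 × 𝒳_2 × {0,1}^2 that factorizes as p(x_1, x_2, r_1, r_2) = μ(x_1, x_2)·f(r_1 | x_2)·g(r_2 | x_1), where μ is a strictly positive pmf on 𝒳_1 × 𝒳_2 and f(· | x_2), g(· | x_1) are conditional pmfs on {0,1}. If p(R = (1,0)) = 0, then p(R = (1,1)) = 0 or p(R = (0,0)) = 0. (The pattern R = 10 cannot have zero support in isolation if the full law factorizes according to this m-graph.) -/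
/-!
Since `μ > 0` and all terms are nonnegative, `∑ μ(x₁, x₂) f(r₁ | x₂) g(r₂ | x₁) = 0` forces
`f(r₁ | x₂) g(r₂ | x₁) = 0` at every `(x₁, x₂)`. The two factors depend on different variables, so
one of them vanishes identically: either every pattern with first entry `r₁` is null, or every
pattern with second entry `r₂` is.
-/

section OrderedSemiring

variable {ι κ R : Type*} [Fintype ι] [Fintype κ] [Semiring R] [PartialOrder R] [IsOrderedRing R]

theorem sum_sum_eq_zero_iff_of_nonneg {M : Type*} [AddCommMonoid M] [PartialOrder M]
    [IsOrderedAddMonoid M] {a : ι → κ → M} (ha : ∀ i j, 0 ≤ a i j) :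
    ∑ i, ∑ j, a i j = 0 ↔ ∀ i j, a i j = 0 := by
  have uncurry_nonneg : 0 ≤ Function.uncurry a := fun x ↦ ha x.1 x.2
  calc ∑ i, ∑ j, a i j = 0
      ↔ ∑ x, Function.uncurry a x = 0 := by rw [Fintype.sum_prod_type]; rfl
    _ ↔ Function.uncurry a = 0 := Fintype.sum_eq_zero_iff_of_nonneg uncurry_nonneg
    _ ↔ ∀ i j, a i j = 0 := by simp only [funext_iff, Prod.forall, Function.uncurry_apply_pair,
          Pi.zero_apply]

theorem sum_sum_mul_mul_eq_zero_iff [NoZeroDivisors R] {w : ι → κ → R} {u : κ → R} {v : ι → R}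
    (hw : ∀ i j, 0 < w i j) (hu : ∀ j, 0 ≤ u j) (hv : ∀ i, 0 ≤ v i) :
    ∑ i, ∑ j, w i j * u j * v i = 0 ↔ (∀ j, u j = 0) ∨ ∀ i, v i = 0 := by
  have term_nonneg (i j) : 0 ≤ w i j * u j * v i :=
    mul_nonneg (mul_nonneg (hw i j).le (hu j)) (hv i)
  calc ∑ i, ∑ j, w i j * u j * v i = 0
      ↔ ∀ i j, w i j * u j * v i = 0 := sum_sum_eq_zero_iff_of_nonneg term_nonneg
    _ ↔ ∀ i j, u j = 0 ∨ v i = 0 := by simp only [mul_eq_zero, (hw _ _).ne', false_or]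
    _ ↔ (∀ j, u j = 0) ∨ ∀ i, v i = 0 := by simp only [forall_or_left, forall_or_right]

theorem pattern_support_compatibility_general [NoZeroDivisors R] {ρ₁ ρ₂ : Type*}
    {p : ι → κ → ρ₁ → ρ₂ → R} {μ : ι → κ → R} {f : ρ₁ → κ → R} {g : ρ₂ → ι → R}
    (hμ_pos : ∀ x₁ x₂, 0 < μ x₁ x₂) (hf_nonneg : ∀ r₁ x₂, 0 ≤ f r₁ x₂)
    (hg_nonneg : ∀ r₂ x₁, 0 ≤ g r₂ x₁)
    (hfact : ∀ x₁ x₂ r₁ r₂, p x₁ x₂ r₁ r₂ = μ x₁ x₂ * f r₁ x₂ * g r₂ x₁)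
    {r₁ : ρ₁} {r₂ : ρ₂} (h : ∑ x₁, ∑ x₂, p x₁ x₂ r₁ r₂ = 0) :
    (∀ s₂, ∑ x₁, ∑ x₂, p x₁ x₂ r₁ s₂ = 0) ∨ ∀ s₁, ∑ x₁, ∑ x₂, p x₁ x₂ s₁ r₂ = 0 := by
  have marginal_eq_zero_iff (s₁ s₂) :
      ∑ x₁, ∑ x₂, p x₁ x₂ s₁ s₂ = 0 ↔ (∀ x₂, f s₁ x₂ = 0) ∨ ∀ x₁, g s₂ x₁ = 0 := by
    simp only [hfact]
    exact sum_sum_mul_mul_eq_zero_iff hμ_pos (hf_nonneg s₁) (hg_nonneg s₂)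
  exact ((marginal_eq_zero_iff r₁ r₂).mp h).imp
    (fun hf s₂ ↦ (marginal_eq_zero_iff r₁ s₂).mpr (.inl hf))
    (fun hg s₁ ↦ (marginal_eq_zero_iff s₁ r₂).mpr (.inr hg))

end OrderedSemiring

/-- If a full law factorizes as
`p(x1, x2, r1, r2) = μ(x1, x2) · f(r1 | x2) · g(r2 | x1)` with `μ` strictly positive,
then the pattern `R = 10` cannot have zero support in isolation: if `p(R = (1,0)) = 0`
then `p(R = (1,1)) = 0` or `p(R = (0,0)) = 0`. -/
theorem pattern_support_compatibility
    (𝒳₁ 𝒳₂ : Type) [Fintype 𝒳₁] [Fintype 𝒳₂] [Nonempty 𝒳₁] [Nonempty 𝒳₂]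
    (p : 𝒳₁ → 𝒳₂ → Bool → Bool → ℝ)
    (μ : 𝒳₁ → 𝒳₂ → ℝ) (f : Bool → 𝒳₂ → ℝ) (g : Bool → 𝒳₁ → ℝ)
    -- `μ` is a strictly positive pmf
    (hμ_pos : ∀ x1 x2, 0 < μ x1 x2)
    (hμ_sum : ∑ x1 : 𝒳₁, ∑ x2 : 𝒳₂, μ x1 x2 = 1)
    -- `f(· | x2)` and `g(· | x1)` are conditional pmfs on `{0,1}`
    (hf_nonneg : ∀ r1 x2, 0 ≤ f r1 x2)
    (hf_sum : ∀ x2, f false x2 + f true x2 = 1)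
    (hg_nonneg : ∀ r2 x1, 0 ≤ g r2 x1)
    (hg_sum : ∀ x1, g false x1 + g true x1 = 1)
    -- the factorization of the full law
    (hfact : ∀ x1 x2 r1 r2, p x1 x2 r1 r2 = μ x1 x2 * f r1 x2 * g r2 x1)
    -- `p(R = (1,0)) = 0`
    (h10 : ∑ x1 : 𝒳₁, ∑ x2 : 𝒳₂, p x1 x2 true false = 0) :
    (∑ x1 : 𝒳₁, ∑ x2 : 𝒳₂, p x1 x2 true true = 0)
      ∨ (∑ x1 : 𝒳₁, ∑ x2 : 𝒳₂, p x1 x2 false false = 0) :=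
  (pattern_support_compatibility_general hμ_pos hf_nonneg hg_nonneg hfact h10).imp
    (fun h ↦ h true) (fun h ↦ h false)
end

section
/- Let 𝒳_1, 𝒳_2 be nonempty finite sets and let p be a probability mass function on 𝒳_1 × 𝒳_2 × {0,1}^2 that factorizes as p(x_1, x_2, r_1, r_2) = μ(x_1, x_2)·f(r_1 | x_2)·g(r_2 | x_1), where μ is a strictly positive pmf on 𝒳_1 × 𝒳_2 and f(· | x_2), g(· | x_1) are conditional pmfs on {0,1}. If p(R = (1,0)) = 0 and p(R = (0,1)) = 0, then p(R = (1,1)) = 0 or p(R = (0,0)) = 0. (There is no such full law whose set of supported missingness patterns is exactly {11, 00}; i.e., ℛ⁺ = {11, 00} is not compatible with the factorization.) -/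
/-!
For a strictly positive `μ`, a sum of nonnegative terms `μ x y * u y * v x` vanishes only if
`u y * v x` vanishes identically, that is, only if `u = 0` or `v = 0`. Hence a missingness pattern
`(r₁, r₂)` of probability zero forces `f r₁ = 0` or `g r₂ = 0`, and then every pattern with first
coordinate `r₁`, or every pattern with second coordinate `r₂`, has probability zero as well. Both
`(1, 1)` and `(0, 0)` share a coordinate with `(1, 0)`.
-/

section PositiveWeights

variable {α β K : Type*} [Fintype α] [Fintype β] [Semiring K] [PartialOrder K] [IsOrderedRing K]
  [NoZeroDivisors K]

theorem sum_sum_pos_mul_mul_eq_zero_iff {μ : α → β → K} {u : β → K} {v : α → K}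
    (hμ : ∀ x y, 0 < μ x y) (hu : 0 ≤ u) (hv : 0 ≤ v) :
    ∑ x, ∑ y, μ x y * u y * v x = 0 ↔ u = 0 ∨ v = 0 := by
  have term_nonneg (x : α) (y : β) : 0 ≤ μ x y * u y * v x :=
    mul_nonneg (mul_nonneg (hμ x y).le (hu y)) (hv x)
  calc
    ∑ x, ∑ y, μ x y * u y * v x = 0 ↔ ∀ x y, μ x y * u y * v x = 0 := by
      simp only [Finset.sum_eq_zero_iff_of_nonneg, Finset.sum_nonneg, term_nonneg,
        Finset.mem_univ, implies_true, forall_const]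
    _ ↔ ∀ x y, u y = 0 ∨ v x = 0 := by
      simp only [mul_eq_zero, (hμ _ _).ne', false_or]
    _ ↔ u = 0 ∨ v = 0 := by
      simp only [forall_or_left, forall_or_right, funext_iff, Pi.zero_apply]

theorem no_support_exactly_11_00_general {ρ σ : Type*} {p : α → β → ρ → σ → K}
    {μ : α → β → K} {f : ρ → β → K} {g : σ → α → K} {r₁ : ρ} {r₂ : σ}
    (hμ : ∀ x y, 0 < μ x y) (hf : 0 ≤ f r₁) (hg : 0 ≤ g r₂)
    (hfact : ∀ x y s₁ s₂, p x y s₁ s₂ = μ x y * f s₁ y * g s₂ x)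
    (hzero : ∑ x, ∑ y, p x y r₁ r₂ = 0) :
    (∀ s₂, ∑ x, ∑ y, p x y r₁ s₂ = 0) ∨ (∀ s₁, ∑ x, ∑ y, p x y s₁ r₂ = 0) := by
  simp only [hfact] at hzero ⊢
  rcases (sum_sum_pos_mul_mul_eq_zero_iff hμ hf hg).1 hzero with hf_zero | hg_zero
  · left
    simp only [hf_zero, Pi.zero_apply, mul_zero, zero_mul, Finset.sum_const_zero, implies_true]
  · right
    simp only [hg_zero, Pi.zero_apply, mul_zero, Finset.sum_const_zero, implies_true]

end PositiveWeights

/-- If a full law factorizes as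
`p(x1, x2, r1, r2) = μ(x1, x2) · f(r1 | x2) · g(r2 | x1)` with `μ` strictly positive,
and `p(R = (1,0)) = 0` and `p(R = (0,1)) = 0`,
then `p(R = (1,1)) = 0` or `p(R = (0,0)) = 0`; i.e. `ℛ⁺ = {11, 00}` is not compatible. -/
theorem no_support_exactly_11_00
    (𝒳₁ 𝒳₂ : Type) [Fintype 𝒳₁] [Fintype 𝒳₂] [Nonempty 𝒳₁] [Nonempty 𝒳₂]
    (p : 𝒳₁ → 𝒳₂ → Bool → Bool → ℝ)
    (μ : 𝒳₁ → 𝒳₂ → ℝ) (f : Bool → 𝒳₂ → ℝ) (g : Bool → 𝒳₁ → ℝ)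
    -- `μ` is a strictly positive pmf
    (hμ_pos : ∀ x1 x2, 0 < μ x1 x2)
    (hμ_sum : ∑ x1 : 𝒳₁, ∑ x2 : 𝒳₂, μ x1 x2 = 1)
    -- `f(· | x2)` and `g(· | x1)` are conditional pmfs on `{0,1}`
    (hf_nonneg : ∀ r1 x2, 0 ≤ f r1 x2)
    (hf_sum : ∀ x2, f false x2 + f true x2 = 1)
    (hg_nonneg : ∀ r2 x1, 0 ≤ g r2 x1)
    (hg_sum : ∀ x1, g false x1 + g true x1 = 1)
    -- the factorization of the full law
    (hfact : ∀ x1 x2 r1 r2, p x1 x2 r1 r2 = μ x1 x2 * f r1 x2 * g r2 x1)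
    -- `p(R = (1,0)) = 0`
    (h10 : ∑ x1 : 𝒳₁, ∑ x2 : 𝒳₂, p x1 x2 true false = 0)
    -- `p(R = (0,1)) = 0`
    (h01 : ∑ x1 : 𝒳₁, ∑ x2 : 𝒳₂, p x1 x2 false true = 0) :
    (∑ x1 : 𝒳₁, ∑ x2 : 𝒳₂, p x1 x2 true true = 0)
      ∨ (∑ x1 : 𝒳₁, ∑ x2 : 𝒳₂, p x1 x2 false false = 0) :=
  (no_support_exactly_11_00_general hμ_pos (hf_nonneg true) (hg_nonneg false) hfact h10).imp
    (· true) (· false)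
end

section
/- Let 𝒳_1, 𝒳_2, 𝒳_3 be nonempty finite sets and let ℛ⁺ = {011, 101, 001, 010, 100, 000} ⊆ {0,1}^3 (so the patterns 111 and 110, including the complete case, have no support). Let p and q be probability mass functions on 𝒳_1 × 𝒳_2 × 𝒳_3 × {0,1}^3 such that, for both p and q: (i) p(X = x, R = r) > 0 for every x and every r ∈ ℛ⁺, and p(X = x, R = r) = 0 for r ∈ {111, 110}; (ii) the conditional independences X_1 ⊥ (X_2, X_3, R_1, R_2) | R_3, X_2 ⊥ (X_1, R_1, R_2, R_3) | X_3, and X_3 ⊥ (X_1, R_3) | X_2, R_1, R_2 hold. If, for every r ∈ ℛ⁺, every o, and every assignment x_{O(r)}, ∑_{x_{M(r)}} p(X = x, R = r) = ∑_{x_{M(r)}} q(X = x, R = r), then p = q. (Identification of the full law without any complete cases, via the PM-ID* argument of the appendix.) -/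
/-- The conditional independence `X_1 ⊥ (X_2, X_3, R_1, R_2) | R_3` for a pmf on
`𝒳₁ × 𝒳₂ × 𝒳₃ × {0,1}³`. -/
def CI_X1 {𝒳₁ 𝒳₂ 𝒳₃ : Type} [Fintype 𝒳₁] [Fintype 𝒳₂] [Fintype 𝒳₃]
    (p : 𝒳₁ → 𝒳₂ → 𝒳₃ → Bool → Bool → Bool → ℝ) : Prop :=
  ∀ (x1 : 𝒳₁) (x2 : 𝒳₂) (x3 : 𝒳₃) (r1 r2 r3 : Bool),
    0 < (∑ y1 : 𝒳₁, ∑ y2 : 𝒳₂, ∑ y3 : 𝒳₃, ∑ b1 : Bool, ∑ b2 : Bool,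
          p y1 y2 y3 b1 b2 r3) →
    p x1 x2 x3 r1 r2 r3
        / (∑ y1 : 𝒳₁, ∑ y2 : 𝒳₂, ∑ y3 : 𝒳₃, ∑ b1 : Bool, ∑ b2 : Bool,
            p y1 y2 y3 b1 b2 r3)
      = ((∑ y2 : 𝒳₂, ∑ y3 : 𝒳₃, ∑ b1 : Bool, ∑ b2 : Bool, p x1 y2 y3 b1 b2 r3)
          / (∑ y1 : 𝒳₁, ∑ y2 : 𝒳₂, ∑ y3 : 𝒳₃, ∑ b1 : Bool, ∑ b2 : Bool,
              p y1 y2 y3 b1 b2 r3))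
        * ((∑ y1 : 𝒳₁, p y1 x2 x3 r1 r2 r3)
          / (∑ y1 : 𝒳₁, ∑ y2 : 𝒳₂, ∑ y3 : 𝒳₃, ∑ b1 : Bool, ∑ b2 : Bool,
              p y1 y2 y3 b1 b2 r3))

/-- The conditional independence `X_2 ⊥ (X_1, R_1, R_2, R_3) | X_3`. -/
def CI_X2 {𝒳₁ 𝒳₂ 𝒳₃ : Type} [Fintype 𝒳₁] [Fintype 𝒳₂] [Fintype 𝒳₃]
    (p : 𝒳₁ → 𝒳₂ → 𝒳₃ → Bool → Bool → Bool → ℝ) : Prop :=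
  ∀ (x1 : 𝒳₁) (x2 : 𝒳₂) (x3 : 𝒳₃) (r1 r2 r3 : Bool),
    0 < (∑ y1 : 𝒳₁, ∑ y2 : 𝒳₂, ∑ b1 : Bool, ∑ b2 : Bool, ∑ b3 : Bool,
          p y1 y2 x3 b1 b2 b3) →
    p x1 x2 x3 r1 r2 r3
        / (∑ y1 : 𝒳₁, ∑ y2 : 𝒳₂, ∑ b1 : Bool, ∑ b2 : Bool, ∑ b3 : Bool,
            p y1 y2 x3 b1 b2 b3)
      = ((∑ y1 : 𝒳₁, ∑ b1 : Bool, ∑ b2 : Bool, ∑ b3 : Bool, p y1 x2 x3 b1 b2 b3)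
          / (∑ y1 : 𝒳₁, ∑ y2 : 𝒳₂, ∑ b1 : Bool, ∑ b2 : Bool, ∑ b3 : Bool,
              p y1 y2 x3 b1 b2 b3))
        * ((∑ y2 : 𝒳₂, p x1 y2 x3 r1 r2 r3)
          / (∑ y1 : 𝒳₁, ∑ y2 : 𝒳₂, ∑ b1 : Bool, ∑ b2 : Bool, ∑ b3 : Bool,
              p y1 y2 x3 b1 b2 b3))

/-- The conditional independence `X_3 ⊥ (X_1, R_3) | X_2, R_1, R_2`. -/
def CI_X3 {𝒳₁ 𝒳₂ 𝒳₃ : Type} [Fintype 𝒳₁] [Fintype 𝒳₂] [Fintype 𝒳₃]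
    (p : 𝒳₁ → 𝒳₂ → 𝒳₃ → Bool → Bool → Bool → ℝ) : Prop :=
  ∀ (x1 : 𝒳₁) (x2 : 𝒳₂) (x3 : 𝒳₃) (r1 r2 r3 : Bool),
    0 < (∑ y1 : 𝒳₁, ∑ y3 : 𝒳₃, ∑ b3 : Bool, p y1 x2 y3 r1 r2 b3) →
    p x1 x2 x3 r1 r2 r3
        / (∑ y1 : 𝒳₁, ∑ y3 : 𝒳₃, ∑ b3 : Bool, p y1 x2 y3 r1 r2 b3)
      = ((∑ y1 : 𝒳₁, ∑ b3 : Bool, p y1 x2 x3 r1 r2 b3)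
          / (∑ y1 : 𝒳₁, ∑ y3 : 𝒳₃, ∑ b3 : Bool, p y1 x2 y3 r1 r2 b3))
        * ((∑ y3 : 𝒳₃, p x1 x2 y3 r1 r2 r3)
          / (∑ y1 : 𝒳₁, ∑ y3 : 𝒳₃, ∑ b3 : Bool, p y1 x2 y3 r1 r2 b3))

/-!
Given its parents, each `Xᵢ` has a conditional law that can be pulled out of the full law, which
gives `p(x, r) = p(x₁ | r₃) p(x₂ | x₃) p(x₃, r)`. Patterns with `r₃ = 1` determine `p(x₃, r)`,
pattern `011` determines `p(x₂ | x₃)`, and patterns `101` and `100` determine `p(x₁ | r₃)`. When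
`r₃ = 0` only the total `p(r)` is visible, but `X₃ ⊥ R₃ | X₂, R₁, R₂` together with `X₂ ⊥ R | X₃`
makes `p(x₃, r₁, r₂, 0)` proportional to `p(x₃, r₁, r₂, 1)` as a function of `x₃`, and the total
fixes the constant.
-/

open Finset

theorem mul_sum_comm_of_mul_eq_mul {ι R : Type*} [CommSemiring R] [IsCancelMulZero R]
    {s : Finset ι} {f g : ι → R} {c d : R} (hc : c ≠ 0) (h : ∀ i, f i * c = g i * d) (i : ι) :
    f i * ∑ j ∈ s, g j = g i * ∑ j ∈ s, f j := by
  have hsum : (∑ j ∈ s, f j) * c = (∑ j ∈ s, g j) * d := by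
    rw [sum_mul, sum_mul]
    exact sum_congr rfl fun j _ => h j
  refine mul_right_cancel₀ hc ?_
  rw [mul_right_comm, h i, mul_right_comm, mul_assoc, mul_assoc, hsum]

section Marginals

variable {𝒳₁ 𝒳₂ 𝒳₃ : Type*}

section

variable [Fintype 𝒳₁] [Fintype 𝒳₃]

/-- The marginal `p(x₂, r₁, r₂)`, summed in the order used by `CI_X3`. -/
def margX2R1R2 (p : 𝒳₁ → 𝒳₂ → 𝒳₃ → Bool → Bool → Bool → ℝ) (x2 : 𝒳₂) (r1 r2 : Bool) : ℝ :=
  ∑ y1, ∑ y3, ∑ b3, p y1 x2 y3 r1 r2 b3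

theorem margX2R1R2_pos {p : 𝒳₁ → 𝒳₂ → 𝒳₃ → Bool → Bool → Bool → ℝ}
    (hp : ∀ x1 x2 x3 r1 r2 r3, 0 ≤ p x1 x2 x3 r1 r2 r3)
    {x1 : 𝒳₁} {x2 : 𝒳₂} {x3 : 𝒳₃} {r1 r2 r3 : Bool} (h : 0 < p x1 x2 x3 r1 r2 r3) :
    0 < margX2R1R2 p x2 r1 r2 := by
  have hsum : margX2R1R2 p x2 r1 r2
      = ∑ z : 𝒳₁ × 𝒳₃ × Bool, p z.1 x2 z.2.1 r1 r2 z.2.2 := by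
    simp only [margX2R1R2, Fintype.sum_prod_type]
  rw [hsum]
  exact sum_pos' (fun _ _ => hp _ _ _ _ _ _) ⟨(x1, x3, r3), mem_univ _, h⟩

end

variable [Fintype 𝒳₁] [Fintype 𝒳₂]

/-- The marginal `p(x₃)`, summed in the order used by `CI_X2`. -/
def margX3 (p : 𝒳₁ → 𝒳₂ → 𝒳₃ → Bool → Bool → Bool → ℝ) (x3 : 𝒳₃) : ℝ :=
  ∑ y1, ∑ y2, ∑ b1, ∑ b2, ∑ b3, p y1 y2 x3 b1 b2 b3

/-- The marginal `p(x₃, r)`, the factor of the full law left over once the conditional laws of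
`X₁` and `X₂` are pulled out. -/
def margX3R (p : 𝒳₁ → 𝒳₂ → 𝒳₃ → Bool → Bool → Bool → ℝ) (x3 : 𝒳₃) (r1 r2 r3 : Bool) : ℝ :=
  ∑ y1, ∑ y2, p y1 y2 x3 r1 r2 r3

/-- The conditional probability `p(x₂ | x₃)`, which is `0` when `p(x₃) = 0`. -/
noncomputable def condX2 (p : 𝒳₁ → 𝒳₂ → 𝒳₃ → Bool → Bool → Bool → ℝ) (x2 : 𝒳₂) (x3 : 𝒳₃) : ℝ :=
  (∑ y1, ∑ b1, ∑ b2, ∑ b3, p y1 x2 x3 b1 b2 b3) / margX3 p x3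

variable {p : 𝒳₁ → 𝒳₂ → 𝒳₃ → Bool → Bool → Bool → ℝ}

theorem margX3R_nonneg (hp : ∀ x1 x2 x3 r1 r2 r3, 0 ≤ p x1 x2 x3 r1 r2 r3)
    (x3 : 𝒳₃) (r1 r2 r3 : Bool) : 0 ≤ margX3R p x3 r1 r2 r3 :=
  sum_nonneg fun _ _ => sum_nonneg fun _ _ => hp _ _ _ _ _ _

theorem margX3R_pos (hp : ∀ x1 x2 x3 r1 r2 r3, 0 ≤ p x1 x2 x3 r1 r2 r3)
    {x1 : 𝒳₁} {x2 : 𝒳₂} {x3 : 𝒳₃} {r1 r2 r3 : Bool} (h : 0 < p x1 x2 x3 r1 r2 r3) :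
    0 < margX3R p x3 r1 r2 r3 :=
  sum_pos' (fun _ _ => sum_nonneg fun _ _ => hp _ _ _ _ _ _)
    ⟨x1, mem_univ _, sum_pos' (fun _ _ => hp _ _ _ _ _ _) ⟨x2, mem_univ _, h⟩⟩

theorem margX3R_le_margX3 (hp : ∀ x1 x2 x3 r1 r2 r3, 0 ≤ p x1 x2 x3 r1 r2 r3)
    (x3 : 𝒳₃) (r1 r2 r3 : Bool) : margX3R p x3 r1 r2 r3 ≤ margX3 p x3 := by
  have hsum : margX3 p x3 = ∑ b : Bool × Bool × Bool, margX3R p x3 b.1 b.2.1 b.2.2 := by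
    simp only [margX3, margX3R, Fintype.sum_prod_type, Fintype.sum_bool, sum_add_distrib]
  rw [hsum]
  exact single_le_sum (f := fun b : Bool × Bool × Bool => margX3R p x3 b.1 b.2.1 b.2.2)
    (fun _ _ => margX3R_nonneg hp _ _ _ _) (mem_univ (r1, r2, r3))

variable [Fintype 𝒳₃]

/-- The marginal `p(r₃)`, summed in the order used by `CI_X1`. -/
def margR3 (p : 𝒳₁ → 𝒳₂ → 𝒳₃ → Bool → Bool → Bool → ℝ) (r3 : Bool) : ℝ :=
  ∑ y1, ∑ y2, ∑ y3, ∑ b1, ∑ b2, p y1 y2 y3 b1 b2 r3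

/-- The probability `p(r)` of a missingness pattern. -/
def margR (p : 𝒳₁ → 𝒳₂ → 𝒳₃ → Bool → Bool → Bool → ℝ) (r1 r2 r3 : Bool) : ℝ :=
  ∑ y1, ∑ y2, ∑ y3, p y1 y2 y3 r1 r2 r3

/-- The conditional probability `p(x₁ | r₃)`, which is `0` when `p(r₃) = 0`. -/
noncomputable def condX1 (p : 𝒳₁ → 𝒳₂ → 𝒳₃ → Bool → Bool → Bool → ℝ) (x1 : 𝒳₁) (r3 : Bool) : ℝ :=
  (∑ y2, ∑ y3, ∑ b1, ∑ b2, p x1 y2 y3 b1 b2 r3) / margR3 p r3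

theorem sum_margX3R (r1 r2 r3 : Bool) : ∑ x3, margX3R p x3 r1 r2 r3 = margR p r1 r2 r3 := by
  simp only [margX3R, margR]
  rw [sum_comm]
  exact sum_congr rfl fun _ _ => sum_comm

theorem margR_pos (hp : ∀ x1 x2 x3 r1 r2 r3, 0 ≤ p x1 x2 x3 r1 r2 r3)
    {x1 : 𝒳₁} {x2 : 𝒳₂} {x3 : 𝒳₃} {r1 r2 r3 : Bool} (h : 0 < p x1 x2 x3 r1 r2 r3) :
    0 < margR p r1 r2 r3 := by
  rw [← sum_margX3R]
  exact sum_pos' (fun _ _ => margX3R_nonneg hp _ _ _ _) ⟨x3, mem_univ _, margX3R_pos hp h⟩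

theorem margR_le_margR3 (hp : ∀ x1 x2 x3 r1 r2 r3, 0 ≤ p x1 x2 x3 r1 r2 r3)
    (r1 r2 r3 : Bool) : margR p r1 r2 r3 ≤ margR3 p r3 := by
  have hsum : margR3 p r3 = ∑ b : Bool × Bool, margR p b.1 b.2 r3 := by
    simp only [margR3, margR, Fintype.sum_prod_type, Fintype.sum_bool, sum_add_distrib]
  rw [hsum]
  exact single_le_sum (f := fun b : Bool × Bool => margR p b.1 b.2 r3)
    (fun _ _ => sum_nonneg fun _ _ => sum_nonneg fun _ _ => sum_nonneg fun _ _ =>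
      hp _ _ _ _ _ _) (mem_univ (r1, r2))

end Marginals

section ConditionalIndependence

variable {𝒳₁ 𝒳₂ 𝒳₃ : Type} [Fintype 𝒳₁] [Fintype 𝒳₂] [Fintype 𝒳₃]
  {p : 𝒳₁ → 𝒳₂ → 𝒳₃ → Bool → Bool → Bool → ℝ}

theorem CI_X1.eq_condX1_mul_sum (h1 : CI_X1 p) {r3 : Bool} (hr3 : 0 < margR3 p r3)
    (x1 : 𝒳₁) (x2 : 𝒳₂) (x3 : 𝒳₃) (r1 r2 : Bool) :
    p x1 x2 x3 r1 r2 r3 = condX1 p x1 r3 * ∑ y1, p y1 x2 x3 r1 r2 r3 :=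
  (div_left_inj' hr3.ne').1 ((h1 x1 x2 x3 r1 r2 r3 hr3).trans (mul_div_assoc _ _ _).symm)

theorem CI_X2.eq_condX2_mul_sum (h2 : CI_X2 p) {x3 : 𝒳₃} (hx3 : 0 < margX3 p x3)
    (x1 : 𝒳₁) (x2 : 𝒳₂) (r1 r2 r3 : Bool) :
    p x1 x2 x3 r1 r2 r3 = condX2 p x2 x3 * ∑ y2, p x1 y2 x3 r1 r2 r3 :=
  (div_left_inj' hx3.ne').1 ((h2 x1 x2 x3 r1 r2 r3 hx3).trans (mul_div_assoc _ _ _).symm)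

theorem CI_X3.mul_margX2R1R2_eq (h3 : CI_X3 p) {x2 : 𝒳₂} {r1 r2 : Bool}
    (hD : 0 < margX2R1R2 p x2 r1 r2) (x1 : 𝒳₁) (x3 : 𝒳₃) (r3 : Bool) :
    p x1 x2 x3 r1 r2 r3 * margX2R1R2 p x2 r1 r2
      = (∑ y1, ∑ b3, p y1 x2 x3 r1 r2 b3) * ∑ y3, p x1 x2 y3 r1 r2 r3 := by
  have h : p x1 x2 x3 r1 r2 r3 / margX2R1R2 p x2 r1 r2
      = (∑ y1, ∑ b3, p y1 x2 x3 r1 r2 b3) / margX2R1R2 p x2 r1 r2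
        * ((∑ y3, p x1 x2 y3 r1 r2 r3) / margX2R1R2 p x2 r1 r2) := h3 x1 x2 x3 r1 r2 r3 hD
  have hne := hD.ne'
  field_simp at h
  exact h

theorem CI_X1.sum_sum_eq_condX1_mul_margR (h1 : CI_X1 p) {r3 : Bool} (hr3 : 0 < margR3 p r3)
    (x1 : 𝒳₁) (r1 r2 : Bool) :
    ∑ x2, ∑ x3, p x1 x2 x3 r1 r2 r3 = condX1 p x1 r3 * margR p r1 r2 r3 := by
  rw [← sum_margX3R, mul_sum, sum_comm]
  refine sum_congr rfl fun x3 _ => ?_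
  rw [margX3R, sum_comm, mul_sum]
  exact sum_congr rfl fun x2 _ => h1.eq_condX1_mul_sum hr3 x1 x2 x3 r1 r2

theorem CI_X2.sum_eq_condX2_mul_margX3R (h2 : CI_X2 p) {x3 : 𝒳₃} (hx3 : 0 < margX3 p x3)
    (x2 : 𝒳₂) (r1 r2 r3 : Bool) :
    ∑ x1, p x1 x2 x3 r1 r2 r3 = condX2 p x2 x3 * margX3R p x3 r1 r2 r3 := by
  rw [margX3R, mul_sum]
  exact sum_congr rfl fun x1 _ => h2.eq_condX2_mul_sum hx3 x1 x2 r1 r2 r3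

theorem eq_condX1_mul_condX2_mul_margX3R (h1 : CI_X1 p) (h2 : CI_X2 p) {x3 : 𝒳₃} {r3 : Bool}
    (hr3 : 0 < margR3 p r3) (hx3 : 0 < margX3 p x3) (x1 : 𝒳₁) (x2 : 𝒳₂) (r1 r2 : Bool) :
    p x1 x2 x3 r1 r2 r3 = condX1 p x1 r3 * (condX2 p x2 x3 * margX3R p x3 r1 r2 r3) := by
  rw [h1.eq_condX1_mul_sum hr3, h2.sum_eq_condX2_mul_margX3R hx3]

theorem CI_X3.sum_mul_sum_sum_comm (h3 : CI_X3 p) {x2 : 𝒳₂} {r1 r2 : Bool}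
    (hD : 0 < margX2R1R2 p x2 r1 r2) (x3 : 𝒳₃) (r3 s3 : Bool) :
    (∑ y1, p y1 x2 x3 r1 r2 r3) * ∑ y3, ∑ y1, p y1 x2 y3 r1 r2 s3
      = (∑ y1, p y1 x2 x3 r1 r2 s3) * ∑ y3, ∑ y1, p y1 x2 y3 r1 r2 r3 := by
  have hsum : ∀ b, (∑ y1, p y1 x2 x3 r1 r2 b) * margX2R1R2 p x2 r1 r2
      = (∑ y1, ∑ b3, p y1 x2 x3 r1 r2 b3) * ∑ y3, ∑ y1, p y1 x2 y3 r1 r2 b := by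
    intro b
    rw [sum_mul, sum_comm (f := fun y3 y1 => p y1 x2 y3 r1 r2 b), mul_sum]
    exact sum_congr rfl fun y1 _ => h3.mul_margX2R1R2_eq hD y1 x3 b
  refine mul_right_cancel₀ hD.ne' ?_
  linear_combination (∑ y3, ∑ y1, p y1 x2 y3 r1 r2 s3) * hsum r3
    - (∑ y3, ∑ y1, p y1 x2 y3 r1 r2 r3) * hsum s3

/-- This is `X₃ ⊥ R₃ | R₁, R₂`, cross-multiplied. -/
theorem margX3R_mul_margR_comm (hp : ∀ x1 x2 x3 r1 r2 r3, 0 ≤ p x1 x2 x3 r1 r2 r3)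
    (h2 : CI_X2 p) (h3 : CI_X3 p) {x1 : 𝒳₁} {x2 : 𝒳₂} {r1 r2 s3 : Bool}
    (hpos : ∀ x3, 0 < p x1 x2 x3 r1 r2 s3) (x3 : 𝒳₃) (r3 : Bool) :
    margX3R p x3 r1 r2 r3 * margR p r1 r2 s3 = margX3R p x3 r1 r2 s3 * margR p r1 r2 r3 := by
  have hX3 : ∀ y3, 0 < margX3 p y3 := fun y3 =>
    (margX3R_pos hp (hpos y3)).trans_le (margX3R_le_margX3 hp y3 r1 r2 s3)
  have hslice : ∀ y3, 0 < ∑ y1, p y1 x2 y3 r1 r2 s3 := fun y3 =>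
    sum_pos' (fun _ _ => hp _ _ _ _ _ _) ⟨x1, mem_univ _, hpos y3⟩
  have hcond : ∀ y3, condX2 p x2 y3 ≠ 0 := fun y3 =>
    left_ne_zero_of_mul (h2.sum_eq_condX2_mul_margX3R (hX3 y3) x2 r1 r2 s3 ▸ (hslice y3).ne')
  have hprop : ∀ y3, margX3R p y3 r1 r2 r3 * ∑ z3, ∑ y1, p y1 x2 z3 r1 r2 s3
      = margX3R p y3 r1 r2 s3 * ∑ z3, ∑ y1, p y1 x2 z3 r1 r2 r3 := by
    intro y3
    refine mul_left_cancel₀ (hcond y3) ?_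
    rw [← mul_assoc, ← mul_assoc, ← h2.sum_eq_condX2_mul_margX3R (hX3 y3),
      ← h2.sum_eq_condX2_mul_margX3R (hX3 y3)]
    exact h3.sum_mul_sum_sum_comm (margX2R1R2_pos hp (hpos y3)) y3 r3 s3
  rw [← sum_margX3R, ← sum_margX3R]
  exact mul_sum_comm_of_mul_eq_mul
    (sum_pos (fun y3 _ => hslice y3) ⟨x3, mem_univ _⟩).ne' hprop x3

end ConditionalIndependence

/-- The observed laws of `p` and `q` agree on every pattern of `ℛ⁺`; the field `obs_r` is the
agreement on the pattern `r`. -/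
structure SameObservedLaws {𝒳₁ 𝒳₂ 𝒳₃ : Type*} [Fintype 𝒳₁] [Fintype 𝒳₂] [Fintype 𝒳₃]
    (p q : 𝒳₁ → 𝒳₂ → 𝒳₃ → Bool → Bool → Bool → ℝ) : Prop where
  obs_011 : ∀ x2 x3, ∑ x1, p x1 x2 x3 false true true = ∑ x1, q x1 x2 x3 false true true
  obs_101 : ∀ x1 x3, ∑ x2, p x1 x2 x3 true false true = ∑ x2, q x1 x2 x3 true false true
  obs_001 : ∀ x3, ∑ x1, ∑ x2, p x1 x2 x3 false false true
    = ∑ x1, ∑ x2, q x1 x2 x3 false false true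
  obs_010 : ∀ x2, ∑ x1, ∑ x3, p x1 x2 x3 false true false
    = ∑ x1, ∑ x3, q x1 x2 x3 false true false
  obs_100 : ∀ x1, ∑ x2, ∑ x3, p x1 x2 x3 true false false
    = ∑ x2, ∑ x3, q x1 x2 x3 true false false
  obs_000 : ∑ x1, ∑ x2, ∑ x3, p x1 x2 x3 false false false
    = ∑ x1, ∑ x2, ∑ x3, q x1 x2 x3 false false false

namespace SameObservedLaws

section

variable {𝒳₁ 𝒳₂ 𝒳₃ : Type*} [Fintype 𝒳₁] [Fintype 𝒳₂] [Fintype 𝒳₃]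
  {p q : 𝒳₁ → 𝒳₂ → 𝒳₃ → Bool → Bool → Bool → ℝ}

theorem margX3R_eq (h : SameObservedLaws p q) (x3 : 𝒳₃) {r1 r2 : Bool}
    (hr : ¬(r1 = true ∧ r2 = true)) : margX3R p x3 r1 r2 true = margX3R q x3 r1 r2 true := by
  match r1, r2, hr with
  | false, false, _ => exact h.obs_001 x3
  | false, true, _ =>
    rw [margX3R, margX3R, sum_comm, sum_comm (f := fun y1 y2 => q y1 y2 x3 false true true)]
    exact sum_congr rfl fun x2 _ => h.obs_011 x2 x3
  | true, false, _ => exact sum_congr rfl fun x1 _ => h.obs_101 x1 x3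

theorem margR_eq (h : SameObservedLaws p q) {r1 r2 : Bool} (hr : ¬(r1 = true ∧ r2 = true))
    (r3 : Bool) : margR p r1 r2 r3 = margR q r1 r2 r3 := by
  match r1, r2, r3, hr with
  | r1, r2, true, hr =>
    rw [← sum_margX3R, ← sum_margX3R]
    exact sum_congr rfl fun x3 _ => h.margX3R_eq x3 hr
  | false, false, false, _ => exact h.obs_000
  | false, true, false, _ =>
    rw [margR, margR, sum_comm, sum_comm (f := fun y1 y2 => ∑ y3, q y1 y2 y3 false true false)]
    exact sum_congr rfl fun x2 _ => h.obs_010 x2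
  | true, false, false, _ => exact sum_congr rfl fun x1 _ => h.obs_100 x1

theorem sum_sum_true_false_eq (h : SameObservedLaws p q) (x1 : 𝒳₁) (r3 : Bool) :
    ∑ x2, ∑ x3, p x1 x2 x3 true false r3 = ∑ x2, ∑ x3, q x1 x2 x3 true false r3 := by
  cases r3 with
  | false => exact h.obs_100 x1
  | true =>
    rw [sum_comm, sum_comm (f := fun x2 x3 => q x1 x2 x3 true false true)]
    exact sum_congr rfl fun x3 _ => h.obs_101 x1 x3

end

variable {𝒳₁ 𝒳₂ 𝒳₃ : Type} [Fintype 𝒳₁] [Fintype 𝒳₂] [Fintype 𝒳₃]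
  {p q : 𝒳₁ → 𝒳₂ → 𝒳₃ → Bool → Bool → Bool → ℝ}

theorem condX1_eq (h : SameObservedLaws p q) (hp1 : CI_X1 p) (hq1 : CI_X1 q) {r3 : Bool}
    (hp : 0 < margR3 p r3) (hq : 0 < margR3 q r3) (hR : margR p true false r3 ≠ 0) (x1 : 𝒳₁) :
    condX1 p x1 r3 = condX1 q x1 r3 := by
  have hsum := h.sum_sum_true_false_eq x1 r3
  rw [hp1.sum_sum_eq_condX1_mul_margR hp, hq1.sum_sum_eq_condX1_mul_margR hq,
    ← h.margR_eq (by decide)] at hsum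
  exact mul_right_cancel₀ hR hsum

theorem condX2_eq (h : SameObservedLaws p q) (hp2 : CI_X2 p) (hq2 : CI_X2 q) {x3 : 𝒳₃}
    (hp : 0 < margX3 p x3) (hq : 0 < margX3 q x3) (hX3R : margX3R p x3 false true true ≠ 0)
    (x2 : 𝒳₂) : condX2 p x2 x3 = condX2 q x2 x3 := by
  have hsum := h.obs_011 x2 x3
  rw [hp2.sum_eq_condX2_mul_margX3R hp, hq2.sum_eq_condX2_mul_margX3R hq,
    ← h.margX3R_eq x3 (by decide)] at hsum
  exact mul_right_cancel₀ hX3R hsum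

end SameObservedLaws

theorem pm_id_star_no_complete_cases_general
    {𝒳₁ 𝒳₂ 𝒳₃ : Type} [Fintype 𝒳₁] [Fintype 𝒳₂] [Fintype 𝒳₃]
    {p q : 𝒳₁ → 𝒳₂ → 𝒳₃ → Bool → Bool → Bool → ℝ}
    (hp : ∀ x1 x2 x3 r1 r2 r3, 0 ≤ p x1 x2 x3 r1 r2 r3)
    (hq : ∀ x1 x2 x3 r1 r2 r3, 0 ≤ q x1 x2 x3 r1 r2 r3)
    (hpos : ∀ x1 x2 x3 r1 r2 r3, ¬(r1 = true ∧ r2 = true) → 0 < p x1 x2 x3 r1 r2 r3)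
    (hp1 : CI_X1 p) (hq1 : CI_X1 q) (hp2 : CI_X2 p) (hq2 : CI_X2 q)
    (hp3 : CI_X3 p) (hq3 : CI_X3 q) (hobs : SameObservedLaws p q)
    (x1 : 𝒳₁) (x2 : 𝒳₂) (x3 : 𝒳₃) {r1 r2 : Bool} (hr : ¬(r1 = true ∧ r2 = true)) (r3 : Bool) :
    p x1 x2 x3 r1 r2 r3 = q x1 x2 x3 r1 r2 r3 := by
  have hX3R : ∀ y3, 0 < margX3R p y3 false true true := fun y3 =>
    margX3R_pos hp (hpos x1 x2 y3 _ _ _ (by decide))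
  have hR : ∀ s3, 0 < margR p r1 r2 s3 := fun s3 => margR_pos hp (hpos x1 x2 x3 _ _ s3 hr)
  have hR10 : ∀ s3, 0 < margR p true false s3 := fun s3 =>
    margR_pos hp (hpos x1 x2 x3 _ _ s3 (by decide))
  have hpX3 : ∀ y3, 0 < margX3 p y3 := fun y3 => (hX3R y3).trans_le (margX3R_le_margX3 hp ..)
  have hqX3 : ∀ y3, 0 < margX3 q y3 := fun y3 =>
    ((hX3R y3).trans_eq (hobs.margX3R_eq y3 (by decide))).trans_le (margX3R_le_margX3 hq ..)
  have hpR3 : ∀ s3, 0 < margR3 p s3 := fun s3 => (hR s3).trans_le (margR_le_margR3 hp ..)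
  have hqR3 : ∀ s3, 0 < margR3 q s3 := fun s3 =>
    ((hR s3).trans_eq (hobs.margR_eq hr s3)).trans_le (margR_le_margR3 hq ..)
  have eq_of_margX3R_eq : ∀ {y3 s3}, margX3R p y3 r1 r2 s3 = margX3R q y3 r1 r2 s3 →
      p x1 x2 y3 r1 r2 s3 = q x1 x2 y3 r1 r2 s3 := by
    intro y3 s3 hm
    rw [eq_condX1_mul_condX2_mul_margX3R hp1 hp2 (hpR3 s3) (hpX3 y3),
      eq_condX1_mul_condX2_mul_margX3R hq1 hq2 (hqR3 s3) (hqX3 y3), hm,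
      hobs.condX1_eq hp1 hq1 (hpR3 s3) (hqR3 s3) (hR10 s3).ne',
      hobs.condX2_eq hp2 hq2 (hpX3 y3) (hqX3 y3) (hX3R y3).ne']
  have eq_true : ∀ y3, p x1 x2 y3 r1 r2 true = q x1 x2 y3 r1 r2 true := fun y3 =>
    eq_of_margX3R_eq (hobs.margX3R_eq y3 hr)
  have hposp : ∀ y3, 0 < p x1 x2 y3 r1 r2 true := fun y3 => hpos _ _ _ _ _ _ hr
  have hposq : ∀ y3, 0 < q x1 x2 y3 r1 r2 true := fun y3 => eq_true y3 ▸ hposp y3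
  refine eq_of_margX3R_eq (mul_right_cancel₀ (hR true).ne' ?_)
  rw [margX3R_mul_margR_comm hp hp2 hp3 hposp, hobs.margX3R_eq x3 hr, hobs.margR_eq hr,
    hobs.margR_eq hr, margX3R_mul_margR_comm hq hq2 hq3 hposq]

/-- Identification of the full law without any complete cases (PM-ID*):
with support exactly on `ℛ⁺ = {011, 101, 001, 010, 100, 000}` (no support on `111` or
`110`), the stated conditional independences, and equal observed laws, the two full
laws coincide. -/
theorem pm_id_star_no_complete_cases
    (𝒳₁ 𝒳₂ 𝒳₃ : Type) [Fintype 𝒳₁] [Fintype 𝒳₂] [Fintype 𝒳₃]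
    [Nonempty 𝒳₁] [Nonempty 𝒳₂] [Nonempty 𝒳₃]
    (p q : 𝒳₁ → 𝒳₂ → 𝒳₃ → Bool → Bool → Bool → ℝ)
    -- `p` and `q` are probability mass functions
    (hp_nonneg : ∀ x1 x2 x3 r1 r2 r3, 0 ≤ p x1 x2 x3 r1 r2 r3)
    (hp_sum : ∑ x1 : 𝒳₁, ∑ x2 : 𝒳₂, ∑ x3 : 𝒳₃, ∑ r1 : Bool, ∑ r2 : Bool, ∑ r3 : Bool,
      p x1 x2 x3 r1 r2 r3 = 1)
    (hq_nonneg : ∀ x1 x2 x3 r1 r2 r3, 0 ≤ q x1 x2 x3 r1 r2 r3)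
    (hq_sum : ∑ x1 : 𝒳₁, ∑ x2 : 𝒳₂, ∑ x3 : 𝒳₃, ∑ r1 : Bool, ∑ r2 : Bool, ∑ r3 : Bool,
      q x1 x2 x3 r1 r2 r3 = 1)
    -- (i) positivity on `ℛ⁺` (all patterns except 111 and 110) and zero elsewhere
    (hp_pos : ∀ x1 x2 x3 r1 r2 r3, ¬(r1 = true ∧ r2 = true) → 0 < p x1 x2 x3 r1 r2 r3)
    (hq_pos : ∀ x1 x2 x3 r1 r2 r3, ¬(r1 = true ∧ r2 = true) → 0 < q x1 x2 x3 r1 r2 r3)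
    (hp_zero : ∀ x1 x2 x3 r3, p x1 x2 x3 true true r3 = 0)
    (hq_zero : ∀ x1 x2 x3 r3, q x1 x2 x3 true true r3 = 0)
    -- (ii) the conditional independences hold under both `p` and `q`
    (hCI1p : CI_X1 p) (hCI1q : CI_X1 q)
    (hCI2p : CI_X2 p) (hCI2q : CI_X2 q)
    (hCI3p : CI_X3 p) (hCI3q : CI_X3 q)
    -- the observed laws agree on every pattern in `ℛ⁺`
    (hobs011 : ∀ x2 x3, (∑ x1 : 𝒳₁, p x1 x2 x3 false true true)
      = ∑ x1 : 𝒳₁, q x1 x2 x3 false true true)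
    (hobs101 : ∀ x1 x3, (∑ x2 : 𝒳₂, p x1 x2 x3 true false true)
      = ∑ x2 : 𝒳₂, q x1 x2 x3 true false true)
    (hobs001 : ∀ x3, (∑ x1 : 𝒳₁, ∑ x2 : 𝒳₂, p x1 x2 x3 false false true)
      = ∑ x1 : 𝒳₁, ∑ x2 : 𝒳₂, q x1 x2 x3 false false true)
    (hobs010 : ∀ x2, (∑ x1 : 𝒳₁, ∑ x3 : 𝒳₃, p x1 x2 x3 false true false)
      = ∑ x1 : 𝒳₁, ∑ x3 : 𝒳₃, q x1 x2 x3 false true false)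
    (hobs100 : ∀ x1, (∑ x2 : 𝒳₂, ∑ x3 : 𝒳₃, p x1 x2 x3 true false false)
      = ∑ x2 : 𝒳₂, ∑ x3 : 𝒳₃, q x1 x2 x3 true false false)
    (hobs000 : (∑ x1 : 𝒳₁, ∑ x2 : 𝒳₂, ∑ x3 : 𝒳₃, p x1 x2 x3 false false false)
      = ∑ x1 : 𝒳₁, ∑ x2 : 𝒳₂, ∑ x3 : 𝒳₃, q x1 x2 x3 false false false) :
    ∀ x1 x2 x3 r1 r2 r3, p x1 x2 x3 r1 r2 r3 = q x1 x2 x3 r1 r2 r3 := by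
  intro x1 x2 x3 r1 r2 r3
  by_cases hr : r1 = true ∧ r2 = true
  · rw [hr.1, hr.2, hp_zero, hq_zero]
  · exact pm_id_star_no_complete_cases_general hp_nonneg hq_nonneg hp_pos hCI1p hCI1q hCI2p hCI2q
      hCI3p hCI3q ⟨hobs011, hobs101, hobs001, hobs010, hobs100, hobs000⟩ x1 x2 x3 hr r3
end

section
/- Let 𝒳_1, 𝒳_2, 𝒳_3 be nonempty finite sets and let p be a strictly positive probability mass function on 𝒳_1 × 𝒳_2 × 𝒳_3 × {0,1}^3 under which the conditional independence X_3 ⊥ R_3 | X_1, X_2, R_1, R_2 holds. Then for all x_1, x_2, x_3: p(X = (x_1, x_2, x_3), R = (1,1,0)) = p(X_3 = x_3 | X_1 = x_1, X_2 = x_2, R = (1,1,1)) · ∑_{x_3'} p(X = (x_1, x_2, x_3'), R = (1,1,0)). (Explicit pattern mixture identification of the pattern R = 110 from the complete cases, as in the PM-ID worked example.) -/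
/-!
Given `X₁, X₂, R₁, R₂`, conditional independence says that the table of joint masses of
`(X₃, R₃)` has rank one. Its columns are therefore proportional: after normalization, the column
`R₃ = 0` agrees with the complete-case column `R₃ = 1`.
-/

/-- Independence of the two coordinates under the unnormalized mass function `w`. The defining
ratio identity is multiplied out by the total mass squared, so that nothing is divided by zero. -/
def IndepMass {α β K : Type*} [Fintype α] [Fintype β] [CommSemiring K] (w : α → β → K) : Prop :=
  ∀ a b, w a b * ∑ a', ∑ b', w a' b' = (∑ b', w a b') * ∑ a', w a' b

namespace IndepMass

variable {α β K : Type*} [Fintype α] [Fintype β] {w : α → β → K}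

theorem mul_sum_comm [CommSemiring K] [IsRightCancelMulZero K] (hw : IndepMass w)
    (htotal : ∑ a, ∑ b, w a b ≠ 0) (a : α) (b b' : β) :
    w a b * ∑ a', w a' b' = w a b' * ∑ a', w a' b := by
  refine mul_right_cancel₀ htotal ?_
  calc
    w a b * (∑ a', w a' b') * ∑ a', ∑ c, w a' c
        = (w a b * ∑ a', ∑ c, w a' c) * ∑ a', w a' b' := mul_right_comm _ _ _
    _ = (∑ c, w a c) * (∑ a', w a' b) * ∑ a', w a' b' := by rw [hw a b]
    _ = (∑ c, w a c) * (∑ a', w a' b') * ∑ a', w a' b := mul_right_comm _ _ _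
    _ = (w a b' * ∑ a', ∑ c, w a' c) * ∑ a', w a' b := by rw [hw a b']
    _ = w a b' * (∑ a', w a' b) * ∑ a', ∑ c, w a' c := mul_right_comm _ _ _

variable [Semifield K]

theorem of_div_eq_div_mul_div (htotal : ∑ a, ∑ b, w a b ≠ 0)
    (h : ∀ a b, w a b / ∑ a', ∑ b', w a' b' =
      (∑ b', w a b') / (∑ a', ∑ b', w a' b') * ((∑ a', w a' b) / ∑ a', ∑ b', w a' b')) :
    IndepMass w := by
  intro a b
  have hab := h a b
  rwa [div_mul_div_comm, div_eq_div_iff htotal (mul_ne_zero htotal htotal), ← mul_assoc,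
    mul_left_inj' htotal] at hab

theorem eq_div_sum_mul_sum (hw : IndepMass w) (htotal : ∑ a, ∑ b, w a b ≠ 0) (a : α) (b : β)
    {b' : β} (hb' : ∑ a', w a' b' ≠ 0) :
    w a b = w a b' / (∑ a', w a' b') * ∑ a', w a' b := by
  rw [div_mul_eq_mul_div, eq_div_iff hb']
  exact hw.mul_sum_comm htotal a b b'

end IndepMass

theorem sum_sum_pos_of_sum_pos {α β M : Type*} [Fintype α] [Fintype β] [AddCommMonoid M]
    [PartialOrder M] [IsOrderedAddMonoid M] {w : α → β → M} (hw : ∀ a b, 0 ≤ w a b) {b : β}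
    (hb : 0 < ∑ a, w a b) : 0 < ∑ a, ∑ b, w a b :=
  hb.trans_le <| Finset.sum_le_sum fun a _ ↦
    Finset.single_le_sum (fun b' _ ↦ hw a b') (Finset.mem_univ b)

theorem pm_id_pattern_110_from_complete_cases_general
    {𝒳₁ 𝒳₂ 𝒳₃ ρ₁ ρ₂ ρ₃ : Type*} [Fintype 𝒳₃] [Fintype ρ₃]
    (p : 𝒳₁ → 𝒳₂ → 𝒳₃ → ρ₁ → ρ₂ → ρ₃ → ℝ)
    (hnonneg : ∀ x1 x2 x3 r1 r2 r3, 0 ≤ p x1 x2 x3 r1 r2 r3)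
    (hCI : ∀ x1 x2 x3 r1 r2 r3,
      0 < (∑ y, ∑ b, p x1 x2 y r1 r2 b) →
      p x1 x2 x3 r1 r2 r3 / (∑ y, ∑ b, p x1 x2 y r1 r2 b)
        = ((∑ b, p x1 x2 x3 r1 r2 b) / (∑ y, ∑ b, p x1 x2 y r1 r2 b))
          * ((∑ y, p x1 x2 y r1 r2 r3) / (∑ y, ∑ b, p x1 x2 y r1 r2 b)))
    (x1 : 𝒳₁) (x2 : 𝒳₂) (x3 : 𝒳₃) (r1 : ρ₁) (r2 : ρ₂) (r3 : ρ₃) {s3 : ρ₃}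
    (hs3 : 0 < ∑ y, p x1 x2 y r1 r2 s3) :
    p x1 x2 x3 r1 r2 r3
      = (p x1 x2 x3 r1 r2 s3 / ∑ y, p x1 x2 y r1 r2 s3) * ∑ y, p x1 x2 y r1 r2 r3 := by
  have htotal : 0 < ∑ y, ∑ b, p x1 x2 y r1 r2 b :=
    sum_sum_pos_of_sum_pos (fun y b ↦ hnonneg x1 x2 y r1 r2 b) hs3
  have hindep : IndepMass fun y b ↦ p x1 x2 y r1 r2 b :=
    .of_div_eq_div_mul_div htotal.ne' fun y b ↦ hCI x1 x2 y r1 r2 b htotal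
  exact hindep.eq_div_sum_mul_sum htotal.ne' x3 r3 hs3.ne'

/-- Explicit pattern mixture identification of the pattern `R = 110`
from the complete cases: under strict positivity and
`X_3 ⊥ R_3 | X_1, X_2, R_1, R_2`, the joint at `R = (1,1,0)` equals the complete-case
conditional of `X_3` times the margin of the pattern. -/
theorem pm_id_pattern_110_from_complete_cases
    (𝒳₁ 𝒳₂ 𝒳₃ : Type) [Fintype 𝒳₁] [Fintype 𝒳₂] [Fintype 𝒳₃]
    [Nonempty 𝒳₁] [Nonempty 𝒳₂] [Nonempty 𝒳₃]
    (p : 𝒳₁ → 𝒳₂ → 𝒳₃ → Bool → Bool → Bool → ℝ)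
    -- `p` is a strictly positive probability mass function
    (hpos : ∀ x1 x2 x3 r1 r2 r3, 0 < p x1 x2 x3 r1 r2 r3)
    (hsum : ∑ x1 : 𝒳₁, ∑ x2 : 𝒳₂, ∑ x3 : 𝒳₃, ∑ r1 : Bool, ∑ r2 : Bool, ∑ r3 : Bool,
      p x1 x2 x3 r1 r2 r3 = 1)
    -- `X_3 ⊥ R_3 | X_1, X_2, R_1, R_2`
    (hCI : ∀ (x1 : 𝒳₁) (x2 : 𝒳₂) (x3 : 𝒳₃) (r1 r2 r3 : Bool),
      0 < (∑ y : 𝒳₃, ∑ b : Bool, p x1 x2 y r1 r2 b) →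
      p x1 x2 x3 r1 r2 r3 / (∑ y : 𝒳₃, ∑ b : Bool, p x1 x2 y r1 r2 b)
        = ((∑ b : Bool, p x1 x2 x3 r1 r2 b)
            / (∑ y : 𝒳₃, ∑ b : Bool, p x1 x2 y r1 r2 b))
          * ((∑ y : 𝒳₃, p x1 x2 y r1 r2 r3)
            / (∑ y : 𝒳₃, ∑ b : Bool, p x1 x2 y r1 r2 b))) :
    ∀ (x1 : 𝒳₁) (x2 : 𝒳₂) (x3 : 𝒳₃),
      p x1 x2 x3 true true false
        = (p x1 x2 x3 true true true / ∑ y : 𝒳₃, p x1 x2 y true true true)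
          * ∑ y : 𝒳₃, p x1 x2 y true true false :=
  fun x1 x2 x3 ↦ pm_id_pattern_110_from_complete_cases_general p
    (fun _ _ _ _ _ _ ↦ (hpos _ _ _ _ _ _).le) hCI x1 x2 x3 true true false
    (Finset.sum_pos (fun y _ ↦ hpos x1 x2 y true true true) Finset.univ_nonempty)
end
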